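/- arXiv:2110.08354 — 3 statements merged into one kernel-verified Lean document; each statement's English description precedes it below -/
import Mathlib

section
/- Let K be a field, f ∈ K[x] of degree n ≥ 1, a ∈ K[x] of degree < n, m ≥ 1, and let B ∈ K[y]^{m×m} be an upper triangular basis of relations of R_m^{(a,f)}. Then the diagonal entries of B are, up to multiplication by nonzero elements of K, the invariant factors of B. Exactly k of these invariant factors are nonconstant, for some k ≤ min(m,n), and these nonconstant ones are, again up to nonzero constant factors, the k invariant factors of largest degree of the characteristic matrix y·I_n − M_a; the one of largest degree among them equals the minimal polynomial of a modulo f (that is, the minimal polynomial of the matrix M_a). -/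
open Polynomial Matrix

noncomputable section

variable {K : Type*} [Field K]

/-- Matrix of multiplication by `a` modulo `f` in the basis `1, x, ..., x^(n-1)`:
its `k`-th column is the coefficient vector of `(x^k * a) mod f`. -/
def mulMat (f a : K[X]) (n : ℕ) : Matrix (Fin n) (Fin n) K :=
  fun i k => ((X ^ (k : ℕ) * a) % f).coeff (i : ℕ)

/-- `r(x, a(x))` where `r` is the bivariate polynomial with coefficient vector `v`
(under the coefficient-vector identification `r = v 0 + (v 1) x + ⋯ + (v (m-1)) x^(m-1)`). -/
def relEval (a : K[X]) {m : ℕ} (v : Fin m → K[X]) : K[X] :=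
  ∑ i : Fin m, X ^ (i : ℕ) * ((v i).comp a)

/-- `v` represents an element of the module of relations `R_m^{(a,f)}`. -/
def IsRelation (f a : K[X]) {m : ℕ} (v : Fin m → K[X]) : Prop :=
  f ∣ relEval a v

/-- Matrix of relations of `R_m^{(a,f)}`: nonsingular, all columns are relations. -/
def IsRelMat (f a : K[X]) {m : ℕ} (R : Matrix (Fin m) (Fin m) K[X]) : Prop :=
  R.det ≠ 0 ∧ ∀ j, IsRelation f a (fun i => R i j)

/-- Basis of relations of `R_m^{(a,f)}`: matrix of relations whose columns generate
the module of relations. -/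
def IsRelBasis (f a : K[X]) {m : ℕ} (R : Matrix (Fin m) (Fin m) K[X]) : Prop :=
  IsRelMat f a R ∧ ∀ v : Fin m → K[X], IsRelation f a v →
    v ∈ Submodule.span K[X] (Set.range fun j => fun i => R i j)


/-- `σ` is the (decreasingly ordered) list of invariant factors of the nonsingular square
polynomial matrix `M`: the `σ i` are monic, `σ j ∣ σ i` whenever `i ≤ j`, and `M` has Smith
normal form `diag σ`, i.e. `U * M * V = diag σ` for matrices with unit (nonzero constant)
determinant. -/
def IsInvariantFactors {s : ℕ} (M : Matrix (Fin s) (Fin s) K[X]) (σ : Fin s → K[X]) : Prop :=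
  (∀ i, (σ i).Monic) ∧ (∀ i j : Fin s, i ≤ j → σ j ∣ σ i) ∧
    ∃ U V : Matrix (Fin s) (Fin s) K[X],
      IsUnit U.det ∧ IsUnit V.det ∧ U * M * V = Matrix.diagonal σ

/-!
Let `θ` and `α` be the classes of `x` and `a` in `A = K[x]/⟨f⟩`. Then `R_m^{(a,f)}` consists of the
coefficient vectors of the elements of degree `< m` in `x` of a single ideal `I` of `K[y][x]`,
namely the kernel of `r ↦ r(θ, α)`. Let `b i` generate the ideal of leading coefficients, in
degree `i`, of `I`, so that `b (i + 1) ∣ b i`. By Lazard's structure theorem, `I` contains an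
element `b i * h i` with `h i` monic of degree `i` in `x`. The elements `b i * h i` with `i < m`
form a basis of relations, namely the product of a unimodular triangular matrix and `diag (b i)`;
hence the `b i` with `i < m` are the invariant factors of every basis of relations. If `B` is an
upper triangular basis, `b i ∣ B i i` for all `i`, and comparing determinants shows that these
divisibilities are equalities up to units. Finally, the characteristic matrix of `M_a` presents
`A` as a `K[y]`-module with `y` acting as `α`, so its columns form a basis of relations for `m = n`,
and `b 0` generates the annihilator of this module.
-/

section Divisibility

theorem associated_of_dvd_of_associated_prod {ι M : Type*} [Fintype ι] [CommMonoidWithZero M]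
    [Nontrivial M] [IsCancelMulZero M] {a b : ι → M} (ha : ∀ i, a i ≠ 0) (hab : ∀ i, a i ∣ b i)
    (h : Associated (∏ i, a i) (∏ i, b i)) (i : ι) : Associated (a i) (b i) := by
  choose c hc using hab
  have hprod : IsUnit (∏ i, c i) := by
    obtain ⟨u, hu⟩ := h
    have hcu : (∏ i, a i) * u = (∏ i, a i) * ∏ i, c i := by
      rw [hu, ← Finset.prod_mul_distrib]
      exact Finset.prod_congr rfl fun i _ => hc i
    exact mul_left_cancel₀ (Finset.prod_ne_zero_iff.2 fun i _ => ha i) hcu ▸ u.isUnit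
  rw [hc i]
  exact associated_mul_unit_right _ _
    (isUnit_of_dvd_unit (Finset.dvd_prod_of_mem c (Finset.mem_univ i)) hprod)

theorem exists_lt_iff_not_isUnit {M : Type*} [CommMonoid M] {b : ℕ → M}
    (hb : ∀ i j, i ≤ j → b j ∣ b i) {n : ℕ} (hn : IsUnit (b n)) :
    ∃ k ≤ n, ∀ i, i < k ↔ ¬IsUnit (b i) := by
  classical
  have hex : ∃ k, IsUnit (b k) := ⟨n, hn⟩
  refine ⟨Nat.find hex, Nat.find_min' hex hn, fun i => ⟨Nat.find_min hex, fun hi => ?_⟩⟩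
  by_contra! hle
  exact hi (isUnit_of_dvd_unit (hb _ _ hle) (Nat.find_spec hex))

end Divisibility

section Polynomial

theorem sum_fin_monomial_coeff {R : Type*} [Semiring R] {N : ℕ} {r : R[X]} (hr : r.degree < N) :
    ∑ i : Fin N, monomial (i : ℕ) (r.coeff i) = r :=
  (sum_fin _ (fun _ => monomial_zero_right _) hr).trans r.sum_monomial_eq

theorem associated_iff_exists_C_mul {p q : K[X]} :
    Associated p q ↔ ∃ c : K, c ≠ 0 ∧ q = C c * p := by
  constructor
  · rintro ⟨u, rfl⟩
    obtain ⟨c, hc, hcu⟩ := isUnit_iff.1 u.isUnit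
    exact ⟨c, hc.ne_zero, by rw [hcu, mul_comm]⟩
  · rintro ⟨c, hc, rfl⟩
    exact associated_unit_mul_right _ _ (isUnit_C.2 hc.isUnit)

theorem degree_sub_lt_of_coeff_eq {R : Type*} [Ring R] {p q : R[X]} {k : ℕ}
    (hp : p.natDegree ≤ k) (hq : q.natDegree ≤ k) (h : p.coeff k = q.coeff k) :
    (p - q).degree < k := by
  refine (degree_lt_iff_coeff_zero _ _).2 fun l hl => ?_
  obtain rfl | hkl := hl.eq_or_lt
  · rw [coeff_sub, h, sub_self]
  · rw [coeff_sub, coeff_eq_zero_of_natDegree_lt (hp.trans_lt hkl),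
      coeff_eq_zero_of_natDegree_lt (hq.trans_lt hkl), sub_self]

theorem natDegree_pos_iff_not_isUnit {R : Type*} [CommSemiring R] {p : R[X]} (hp : p.Monic) :
    0 < p.natDegree ↔ ¬IsUnit p := by
  rw [hp.isUnit_iff, hp.natDegree_pos]

end Polynomial

section SmithNormalForm

variable {R ι : Type*} [CommRing R] [Fintype ι]

theorem dvd_det_of_dvd_block [DecidableEq ι] {M : Matrix ι ι R} {p : R} {s t : Finset ι}
    (hst : Fintype.card ι < s.card + t.card) (h : ∀ i ∈ s, ∀ j ∈ t, p ∣ M i j) : p ∣ M.det := by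
  rw [det_apply']
  refine Finset.dvd_sum fun π _ => Dvd.dvd.mul_left ?_ _
  obtain ⟨i, hi⟩ : (s ∩ t.map π.toEmbedding).Nonempty :=
    Finset.inter_nonempty_of_card_lt_card_add_card (Finset.subset_univ _) (Finset.subset_univ _)
      (by rwa [Finset.card_univ, Finset.card_map])
  obtain ⟨his, hit⟩ := Finset.mem_inter.1 hi
  obtain ⟨j, hj, rfl⟩ := Finset.mem_map.1 hit
  exact (h _ his j hj).trans (Finset.dvd_prod_of_mem (fun j => M (π j) j) (Finset.mem_univ j))

variable [IsDomain R] [UniqueFactorizationMonoid R] [LinearOrder ι] {σ ρ : ι → R}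

-- If `p ^ e ∣ σ k` but `p ^ e ∤ ρ k`, then the block of entries `P i j` with `i ≤ k ≤ j` vanishes
-- modulo `p`, and it is too large for `P` to be invertible modulo `p`.
theorem dvd_of_diagonal_mul_eq_mul_diagonal (hσ : ∀ i j, i ≤ j → σ j ∣ σ i)
    (hρ : ∀ i j, i ≤ j → ρ j ∣ ρ i) {P Q : Matrix ι ι R} (hP : IsUnit P.det)
    (h : diagonal σ * Q = P * diagonal ρ) (k : ι) (hk : σ k ≠ 0) : σ k ∣ ρ k := by
  rw [UniqueFactorizationMonoid.dvd_iff_emultiplicity_le hk]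
  intro p hp
  rw [emultiplicity_le_emultiplicity_iff]
  intro e he
  by_contra hne
  have entry_dvd : ∀ i ≤ k, ∀ j ≥ k, p ∣ P i j := by
    intro i hi j hj
    by_contra hpij
    have hij : σ i * Q i j = P i j * ρ j := by
      simpa only [diagonal_mul, mul_diagonal] using congr_fun₂ h i j
    have hpe : p ^ e ∣ P i j * ρ j := hij ▸ (he.trans (hσ i k hi)).mul_right _
    exact hne ((hp.pow_dvd_of_dvd_mul_left e hpij hpe).trans (hρ k j hj))
  have card_lt : Fintype.card ι <
      (Finset.univ.filter (· ≤ k)).card + (Finset.univ.filter (k ≤ ·)).card := by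
    have hsplit := Finset.card_filter_add_card_filter_not (s := Finset.univ) (k ≤ ·)
    have hssub : Finset.univ.filter (¬ k ≤ ·) ⊂ Finset.univ.filter (· ≤ k) :=
      (Finset.ssubset_iff_of_subset
        (Finset.monotone_filter_right _ fun _ _ hi => (not_le.1 hi).le)).2 ⟨k, by simp⟩
    have hcard := Finset.card_lt_card hssub
    rw [Finset.card_univ] at hsplit
    omega
  refine hp.not_isUnit (isUnit_of_dvd_unit (dvd_det_of_dvd_block card_lt fun i hi j hj => ?_) hP)
  exact entry_dvd i (Finset.mem_filter.1 hi).2 j (Finset.mem_filter.1 hj).2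

theorem associated_of_mul_diagonal_mul_eq_diagonal (hσ : ∀ i j, i ≤ j → σ j ∣ σ i)
    (hρ : ∀ i j, i ≤ j → ρ j ∣ ρ i) (hρ0 : ∀ i, ρ i ≠ 0) {P Q : Matrix ι ι R}
    (hP : IsUnit P.det) (hQ : IsUnit Q.det) (h : P * diagonal ρ * Q = diagonal σ) (k : ι) :
    Associated (σ k) (ρ k) := by
  have hσ0 : σ k ≠ 0 := by
    have hdet : (diagonal σ).det ≠ 0 := by
      rw [← h, det_mul, det_mul, det_diagonal]
      exact mul_ne_zero (mul_ne_zero hP.ne_zero (Finset.prod_ne_zero_iff.2 fun i _ => hρ0 i))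
        hQ.ne_zero
    rw [det_diagonal] at hdet
    exact Finset.prod_ne_zero_iff.1 hdet k (Finset.mem_univ k)
  refine associated_of_dvd_dvd ?_ ?_
  · refine dvd_of_diagonal_mul_eq_mul_diagonal hσ hρ hP (Q := Q⁻¹) ?_ k hσ0
    rw [← h, mul_nonsing_inv_cancel_right _ _ hQ]
  · refine dvd_of_diagonal_mul_eq_mul_diagonal hρ hσ (isUnit_nonsing_inv_det _ hP) (Q := Q) ?_ k
      (hρ0 k)
    rw [← h, Matrix.mul_assoc, nonsing_inv_mul_cancel_left _ _ hP]

end SmithNormalForm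

section ColumnSpace

theorem exists_eq_mul_of_range_mulVecLin_le {R l m n : Type*} [CommSemiring R] [Fintype m]
    [Fintype n] {M : Matrix l m R} {N : Matrix l n R}
    (h : LinearMap.range M.mulVecLin ≤ LinearMap.range N.mulVecLin) :
    ∃ W : Matrix n m R, M = N * W := by
  classical
  choose w hw using fun j => h ⟨Pi.single j 1, rfl⟩
  refine ⟨(of w)ᵀ, ext_col fun j => ?_⟩
  rw [← mulVec_single_one M j]
  exact (hw j).symm

theorem exists_isUnit_det_and_eq_mul_of_range_mulVecLin_eq {R ι : Type*} [CommRing R]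
    [IsDomain R] [Fintype ι] [DecidableEq ι] {M N : Matrix ι ι R} (hM : M.det ≠ 0)
    (h : LinearMap.range M.mulVecLin = LinearMap.range N.mulVecLin) :
    ∃ W : Matrix ι ι R, IsUnit W.det ∧ M = N * W := by
  obtain ⟨W, hW⟩ := exists_eq_mul_of_range_mulVecLin_le h.le
  obtain ⟨V, hV⟩ := exists_eq_mul_of_range_mulVecLin_le h.ge
  have hdet : M.det * (V.det * W.det) = M.det * 1 := by
    rw [← mul_assoc, ← det_mul, ← det_mul, ← hV, ← hW, mul_one]
  exact ⟨W, .of_mul_eq_one_right _ (mul_left_cancel₀ hM hdet), hW⟩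

end ColumnSpace

section Lazard

variable {R : Type*} [CommRing R]

theorem mem_leadingCoeffNth_iff_exists_coeff {I : Ideal R[X]} {i : ℕ} {x : R} :
    x ∈ I.leadingCoeffNth i ↔ ∃ r ∈ I, r.natDegree ≤ i ∧ r.coeff i = x := by
  simp only [Ideal.leadingCoeffNth, Submodule.mem_map, Ideal.degreeLE, Submodule.mem_inf,
    mem_degreeLE, natDegree_le_iff_degree_le, lcoeff_apply]
  constructor
  · rintro ⟨r, ⟨hd, hr⟩, hx⟩
    exact ⟨r, hr, hd, hx⟩
  · rintro ⟨r, hr, hd, hx⟩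
    exact ⟨r, ⟨hd, hr⟩, hx⟩

/-- The vectors of coefficients of the elements of degree less than `N` of an ideal of `R[X]`. For
`R = K[y]` and the ideal of `r ∈ K[y][x]` such that `f ∣ r(x, a(x))`, this is the module of
relations `R_N^{(a,f)}`. -/
def coeffVectors (I : Ideal R[X]) (N : ℕ) : Submodule R (Fin N → R) :=
  (I.restrictScalars R ⊓ degreeLT R N).map (toFn N)

theorem mem_coeffVectors {I : Ideal R[X]} {N : ℕ} {v : Fin N → R} :
    v ∈ coeffVectors I N ↔ ∃ r ∈ I, r.degree < N ∧ toFn N r = v := by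
  simp only [coeffVectors, Submodule.mem_map, Submodule.mem_inf, Submodule.restrictScalars_mem,
    mem_degreeLT, and_assoc]

variable [IsPrincipalIdealRing R] {I : Ideal R[X]}

/-- A generator of the ideal formed by the coefficients of degree `i` of the elements of `I` of
degree at most `i`. It is unique only up to units. -/
def leadingCoeffGen (I : Ideal R[X]) (i : ℕ) : R :=
  Submodule.IsPrincipal.generator (I.leadingCoeffNth i)

theorem mem_leadingCoeffNth_iff_leadingCoeffGen_dvd {i : ℕ} {x : R} :
    x ∈ I.leadingCoeffNth i ↔ leadingCoeffGen I i ∣ x :=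
  Submodule.IsPrincipal.mem_iff_generator_dvd _

theorem leadingCoeffGen_dvd_coeff {i : ℕ} {r : R[X]} (hr : r ∈ I) (hd : r.natDegree ≤ i) :
    leadingCoeffGen I i ∣ r.coeff i :=
  mem_leadingCoeffNth_iff_leadingCoeffGen_dvd.1
    (mem_leadingCoeffNth_iff_exists_coeff.2 ⟨r, hr, hd, rfl⟩)

theorem exists_mem_coeff_eq_leadingCoeffGen (I : Ideal R[X]) (i : ℕ) :
    ∃ r ∈ I, r.natDegree ≤ i ∧ r.coeff i = leadingCoeffGen I i :=
  mem_leadingCoeffNth_iff_exists_coeff.1 (Submodule.IsPrincipal.generator_mem _)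

theorem leadingCoeffGen_dvd_of_le (I : Ideal R[X]) {i j : ℕ} (hij : i ≤ j) :
    leadingCoeffGen I j ∣ leadingCoeffGen I i :=
  mem_leadingCoeffNth_iff_leadingCoeffGen_dvd.1
    (I.leadingCoeffNth_mono hij (Submodule.IsPrincipal.generator_mem _))

theorem leadingCoeffGen_zero_dvd_iff {x : R} : leadingCoeffGen I 0 ∣ x ↔ C x ∈ I := by
  rw [← mem_leadingCoeffNth_iff_leadingCoeffGen_dvd, Ideal.mem_leadingCoeffNth_zero]

theorem leadingCoeffGen_ne_zero (h0 : leadingCoeffGen I 0 ≠ 0) (i : ℕ) :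
    leadingCoeffGen I i ≠ 0 :=
  ne_zero_of_dvd_ne_zero h0 (leadingCoeffGen_dvd_of_le I i.zero_le)

theorem span_C_leadingCoeffGen_mul {h : ℕ → R[X]} (hmonic : ∀ i, (h i).Monic)
    (hdeg : ∀ i, (h i).natDegree = i) (hmem : ∀ i, C (leadingCoeffGen I i) * h i ∈ I) (N : ℕ) :
    Submodule.span R (Set.range fun j : Fin N => C (leadingCoeffGen I j) * h j) =
      I.restrictScalars R ⊓ degreeLT R N := by
  have natDegree_le (i : ℕ) : (C (leadingCoeffGen I i) * h i).natDegree ≤ i :=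
    (natDegree_C_mul_le _ _).trans_eq (hdeg i)
  apply le_antisymm
  · rw [Submodule.span_le]
    rintro _ ⟨j, rfl⟩
    exact ⟨hmem j, mem_degreeLT.2 <|
      (degree_le_of_natDegree_le (natDegree_le j)).trans_lt (by exact_mod_cast j.2)⟩
  suffices mem_span : ∀ k ≤ N, ∀ r ∈ I, r.degree < k →
      r ∈ Submodule.span R (Set.range fun j : Fin N => C (leadingCoeffGen I j) * h j) from
    fun r hr => mem_span N le_rfl r hr.1 (mem_degreeLT.1 hr.2)
  intro k
  induction k with
  | zero =>
    intro _ r _ hd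
    have hr0 : r = 0 := degree_eq_bot.1 (by simpa using hd)
    exact hr0 ▸ Submodule.zero_mem _
  | succ k ih =>
    intro hk r hr hd
    have hrd : r.natDegree ≤ k :=
      natDegree_le_iff_coeff_eq_zero.2 ((degree_lt_iff_coeff_zero _ _).1 hd)
    obtain ⟨c, hc⟩ := leadingCoeffGen_dvd_coeff hr hrd
    have hlead : (h k).coeff k = 1 := by simpa only [hdeg] using (hmonic k).coeff_natDegree
    have hcoeff : r.coeff k = (c • (C (leadingCoeffGen I k) * h k)).coeff k := by
      rw [coeff_smul, coeff_C_mul, hlead, mul_one, smul_eq_mul, hc, mul_comm]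
    have hrest := ih (Nat.le_of_succ_le hk) _
      (I.sub_mem hr ((I.restrictScalars R).smul_mem c (hmem k)))
      (degree_sub_lt_of_coeff_eq hrd ((natDegree_smul_le _ _).trans (natDegree_le k)) hcoeff)
    exact (Submodule.sub_mem_iff_left _ (Submodule.smul_mem _ c
      (Submodule.subset_span (Set.mem_range_self (⟨k, hk⟩ : Fin N))))).1 hrest

theorem leadingCoeffGen_dvd_diag_of_isUpperTriangular {N : ℕ}
    {M : Matrix (Fin N) (Fin N) R} (hM : LinearMap.range M.mulVecLin = coeffVectors I N)
    (hMtri : M.IsUpperTriangular) (i : Fin N) : leadingCoeffGen I i ∣ M i i := by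
  obtain ⟨r, hr, hd, hri⟩ :=
    mem_coeffVectors.1 (hM ▸ LinearMap.mem_range_self M.mulVecLin (Pi.single i 1))
  have coeff_eq (k : Fin N) : r.coeff k = M k i := by
    simpa [toFn] using congr_fun hri k
  rw [← coeff_eq]
  refine leadingCoeffGen_dvd_coeff hr (natDegree_le_iff_coeff_eq_zero.2 fun k hk => ?_)
  by_cases hkN : k < N
  · exact (coeff_eq ⟨k, hkN⟩).trans (hMtri hk)
  · exact coeff_eq_zero_of_degree_lt (hd.trans_le (by exact_mod_cast not_lt.1 hkN))

variable [IsDomain R]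

-- The coefficient of degree `i + 1` of `r` is cancelled against that of `X * g`, where `g ∈ I`
-- realizes the generator at `i`. Since that generator is `q` times the one at `i + 1`, only
-- `C q * r` can be reduced in this way, and `q` is removed at the end.
theorem C_leadingCoeffGen_dvd (h0 : leadingCoeffGen I 0 ≠ 0) {i : ℕ} {r : R[X]} (hr : r ∈ I)
    (hd : r.natDegree ≤ i) : C (leadingCoeffGen I i) ∣ r := by
  induction i generalizing r with
  | zero =>
    rw [eq_C_of_natDegree_le_zero hd]
    exact _root_.map_dvd C (leadingCoeffGen_dvd_coeff hr hd)
  | succ i ih =>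
    obtain ⟨g, hgI, hgd, hgc⟩ := exists_mem_coeff_eq_leadingCoeffGen I i
    obtain ⟨q, hq⟩ := leadingCoeffGen_dvd_of_le I i.le_succ
    obtain ⟨c, hc⟩ := leadingCoeffGen_dvd_coeff hr hd
    have hq0 : q ≠ 0 := right_ne_zero_of_mul (hq ▸ leadingCoeffGen_ne_zero h0 i)
    have hXd : (C c * (X * g)).natDegree ≤ i + 1 :=
      (natDegree_C_mul_le _ _).trans (natDegree_mul_le.trans
        ((add_le_add natDegree_X_le hgd).trans_eq (add_comm 1 i)))
    have hcancel : (C q * r - C c * (X * g)).natDegree ≤ i := by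
      refine natDegree_le_pred ((natDegree_sub_le _ _).trans
        (max_le ((natDegree_C_mul_le _ _).trans hd) hXd)) ?_
      rw [coeff_sub, coeff_C_mul, coeff_C_mul, coeff_X_mul, hgc, hc, hq]
      ring
    have hqr : C (leadingCoeffGen I i) ∣ C q * r :=
      (dvd_sub_left (((ih hgI hgd).mul_left X).mul_left (C c))).1 <|
        ih (I.sub_mem (I.mul_mem_left _ hr) (I.mul_mem_left _ (I.mul_mem_left _ hgI))) hcancel
    rw [hq, mul_comm, C_mul] at hqr
    exact (mul_dvd_mul_iff_left (C_ne_zero.2 hq0)).1 hqr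

theorem exists_monic_C_leadingCoeffGen_mul_mem (h0 : leadingCoeffGen I 0 ≠ 0) (i : ℕ) :
    ∃ h : R[X], h.Monic ∧ h.natDegree = i ∧ C (leadingCoeffGen I i) * h ∈ I := by
  obtain ⟨g, hgI, hgd, hgc⟩ := exists_mem_coeff_eq_leadingCoeffGen I i
  obtain ⟨h, rfl⟩ := C_leadingCoeffGen_dvd h0 hgI hgd
  have hb := leadingCoeffGen_ne_zero h0 i
  rw [natDegree_C_mul hb] at hgd
  rw [coeff_C_mul, mul_eq_left₀ hb] at hgc
  refine ⟨h, monic_of_natDegree_le_of_coeff_eq_one i hgd hgc, hgd.antisymm ?_, hgI⟩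
  exact le_natDegree_of_ne_zero (hgc ▸ one_ne_zero)

theorem exists_det_eq_one_and_range_mulVecLin_eq (h0 : leadingCoeffGen I 0 ≠ 0) (N : ℕ) :
    ∃ T : Matrix (Fin N) (Fin N) R, T.det = 1 ∧
      LinearMap.range (T * diagonal fun i : Fin N => leadingCoeffGen I i).mulVecLin =
        coeffVectors I N := by
  choose h hmonic hdeg hmem using exists_monic_C_leadingCoeffGen_mul_mem h0
  refine ⟨of fun i j : Fin N => (h j).coeff i,
    det_matrixOfPolynomials (fun j => h j) (fun j => hdeg j) fun j => hmonic j, ?_⟩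
  rw [coeffVectors, ← span_C_leadingCoeffGen_mul hmonic hdeg hmem, Submodule.map_span,
    ← Set.range_comp, range_mulVecLin]
  congr 2
  ext j i
  simp [toFn, mul_comm]

theorem exists_mul_diagonal_leadingCoeffGen_eq_mul {N : ℕ} {M : Matrix (Fin N) (Fin N) R}
    (h0 : leadingCoeffGen I 0 ≠ 0) (hM : LinearMap.range M.mulVecLin = coeffVectors I N) :
    ∃ T W : Matrix (Fin N) (Fin N) R, T.det = 1 ∧ IsUnit W.det ∧
      T * diagonal (fun i : Fin N => leadingCoeffGen I i) = M * W := by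
  obtain ⟨T, hT, hrange⟩ := exists_det_eq_one_and_range_mulVecLin_eq h0 N
  have hdet : (T * diagonal fun i : Fin N => leadingCoeffGen I i).det ≠ 0 := by
    rw [det_mul, hT, one_mul, det_diagonal]
    exact Finset.prod_ne_zero_iff.2 fun i _ => leadingCoeffGen_ne_zero h0 i
  obtain ⟨W, hW, hTW⟩ :=
    exists_isUnit_det_and_eq_mul_of_range_mulVecLin_eq hdet (hrange.trans hM.symm)
  exact ⟨T, W, hT, hW, hTW⟩

variable {N : ℕ} {M : Matrix (Fin N) (Fin N) R}

theorem associated_leadingCoeffGen_of_mul_mul_eq_diagonal (h0 : leadingCoeffGen I 0 ≠ 0)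
    (hM : LinearMap.range M.mulVecLin = coeffVectors I N) {σ : Fin N → R}
    (hσ : ∀ i j, i ≤ j → σ j ∣ σ i) {U V : Matrix (Fin N) (Fin N) R}
    (hU : IsUnit U.det) (hV : IsUnit V.det) (h : U * M * V = diagonal σ) (i : Fin N) :
    Associated (σ i) (leadingCoeffGen I i) := by
  obtain ⟨T, W, hT, hW, hTW⟩ := exists_mul_diagonal_leadingCoeffGen_eq_mul h0 hM
  refine associated_of_mul_diagonal_mul_eq_diagonal hσ (fun i j => leadingCoeffGen_dvd_of_le I)
    (fun i => leadingCoeffGen_ne_zero h0 i) (P := U * T) (Q := W⁻¹ * V) ?_ ?_ ?_ i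
  · rwa [det_mul, hT, mul_one]
  · rw [det_mul]
    exact (isUnit_nonsing_inv_det W hW).mul hV
  · calc U * T * diagonal (fun i : Fin N => leadingCoeffGen I i) * (W⁻¹ * V)
        = U * (M * W * W⁻¹) * V := by simp only [← hTW, Matrix.mul_assoc]
      _ = diagonal σ := by rw [mul_nonsing_inv_cancel_right _ _ hW, h]

theorem associated_diag_leadingCoeffGen (h0 : leadingCoeffGen I 0 ≠ 0)
    (hM : LinearMap.range M.mulVecLin = coeffVectors I N) (hMtri : M.IsUpperTriangular)
    (i : Fin N) : Associated (leadingCoeffGen I i) (M i i) := by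
  refine associated_of_dvd_of_associated_prod (fun i : Fin N => leadingCoeffGen_ne_zero h0 i)
    (leadingCoeffGen_dvd_diag_of_isUpperTriangular hM hMtri) ?_ i
  obtain ⟨T, W, hT, hW, hTW⟩ := exists_mul_diagonal_leadingCoeffGen_eq_mul h0 hM
  have hdet := congr_arg det hTW
  rw [det_mul, det_mul, hT, one_mul, det_diagonal, det_of_isUpperTriangular hMtri] at hdet
  rw [hdet]
  exact associated_mul_unit_left _ _ hW

end Lazard

section Presentation

variable {R ι : Type*} [CommRing R] [Fintype ι] [DecidableEq ι]

theorem exists_charmatrix_dvd_sub_map_C (M : Matrix ι ι R) (N : Matrix ι ι R[X]) :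
    ∃ W : Matrix ι ι R, charmatrix M ∣ N - W.map C := by
  obtain _ | _ := subsingleton_or_nontrivial (Matrix ι ι R)
  · exact ⟨0, 0, matPolyEquiv.injective (Subsingleton.elim _ _)⟩
  let P := matPolyEquiv N
  have hrem : P %ₘ (X - C M) = C ((P %ₘ (X - C M)).coeff 0) :=
    eq_C_of_degree_le_zero (Order.le_of_lt_succ
      ((degree_modByMonic_lt P (monic_X_sub_C M)).trans_eq (degree_X_sub_C M)))
  refine ⟨(P %ₘ (X - C M)).coeff 0, matPolyEquiv.symm (P /ₘ (X - C M)), ?_⟩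
  apply matPolyEquiv.injective
  rw [map_sub, map_mul, matPolyEquiv_map_C, matPolyEquiv_charmatrix, AlgEquiv.apply_symm_apply,
    ← hrem, sub_eq_iff_eq_add', modByMonic_add_div]

theorem exists_sub_C_comp_mem_range_charmatrix (M : Matrix ι ι R) (v : ι → R[X]) :
    ∃ w : ι → R, v - C ∘ w ∈ LinearMap.range (charmatrix M).mulVecLin := by
  obtain ⟨W, Q, hQ⟩ := exists_charmatrix_dvd_sub_map_C M (diagonal v)
  refine ⟨W *ᵥ 1, Q *ᵥ 1, ?_⟩
  rw [mulVecLin_apply, mulVec_mulVec, ← hQ, sub_mulVec]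
  ext i
  simp [mulVec, dotProduct, diagonal_apply]

variable {V : Type*} [AddCommGroup V] [Module R V]

theorem ker_linearCombination_AEval'_of_basis (b : Module.Basis ι R V) (φ : Module.End R V) :
    LinearMap.ker (Fintype.linearCombination R[X] fun i => Module.AEval'.of φ (b i)) =
      LinearMap.range (charmatrix (LinearMap.toMatrix b b φ)).mulVecLin := by
  set M := LinearMap.toMatrix b b φ with hM
  set L := Fintype.linearCombination R[X] fun i => Module.AEval'.of φ (b i) with hL
  have range_le_ker : LinearMap.range (charmatrix M).mulVecLin ≤ LinearMap.ker L := by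
    rw [range_mulVecLin, Submodule.span_le]
    rintro _ ⟨k, rfl⟩
    have hφ : φ (b k) = ∑ i, M i k • b i := by
      simp [hM, LinearMap.toMatrix_apply]
    rw [SetLike.mem_coe, LinearMap.mem_ker, hL, Fintype.linearCombination_apply]
    simp only [col_apply, charmatrix_apply, diagonal_apply, sub_smul, ite_smul, zero_smul,
      Finset.sum_sub_distrib, Finset.sum_ite_eq', Finset.mem_univ, if_true,
      Module.AEval'.X_smul_of, Module.AEval.C_smul, hφ, map_sum, map_smul, sub_self]
  refine le_antisymm (fun v hv => ?_) range_le_ker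
  obtain ⟨w, hw⟩ := exists_sub_C_comp_mem_range_charmatrix M v
  have hLw : L (C ∘ w) = Module.AEval'.of φ (∑ i, w i • b i) := by
    simp [hL, Fintype.linearCombination_apply]
  have hw0 : L (C ∘ w) = 0 := by
    simpa [LinearMap.mem_ker.1 hv] using range_le_ker hw
  rw [hLw, LinearEquiv.map_eq_zero_iff] at hw0
  have hwC : C ∘ w = 0 := by
    ext1 i
    rw [Function.comp_apply, Fintype.linearIndependent_iff.1 b.linearIndependent w hw0 i, C_0,
      Pi.zero_apply]
  rwa [hwC, sub_zero] at hw

end Presentation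

section PolynomialRelations

variable {R S : Type*} [CommRing R] [CommRing S] [Algebra R S]

variable (R) in
/-- The ideal of polynomial relations `r(θ, α) = 0`, where `r : R[X][X]` is read as a polynomial
in `θ` whose coefficients are polynomials in `α`. -/
def relationIdeal (θ α : S) : Ideal R[X][X] :=
  RingHom.ker (eval₂RingHom (aeval α : R[X] →ₐ[R] S).toRingHom θ)

theorem C_mem_relationIdeal {θ α : S} {p : R[X]} : C p ∈ relationIdeal R θ α ↔ aeval α p = 0 := by
  simp [relationIdeal]

theorem map_C_mem_relationIdeal {θ α : S} {p : R[X]} :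
    p.map C ∈ relationIdeal R θ α ↔ aeval θ p = 0 := by
  have hcomp : (aeval α : R[X] →ₐ[R] S).toRingHom.comp C = algebraMap R S :=
    RingHom.ext (aeval_C α)
  rw [relationIdeal, RingHom.mem_ker, coe_eval₂RingHom, eval₂_map, hcomp, aeval_def]

theorem mem_coeffVectors_relationIdeal {θ α : S} {N : ℕ} {v : Fin N → R[X]} :
    v ∈ coeffVectors (relationIdeal R θ α) N ↔ ∑ i, aeval α (v i) * θ ^ (i : ℕ) = 0 := by
  classical
  have ofFn_mem : ofFn N v ∈ relationIdeal R θ α ↔ ∑ i, aeval α (v i) * θ ^ (i : ℕ) = 0 := by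
    simp [relationIdeal, ofFn_eq_sum_monomial, RingHom.mem_ker, eval₂_monomial]
  rw [← ofFn_mem, mem_coeffVectors]
  constructor
  · rintro ⟨r, hr, hd, rfl⟩
    have hofFn : ofFn N (toFn N r) = r :=
      (ofFn_eq_sum_monomial _).trans (sum_fin_monomial_coeff hd)
    rwa [hofFn]
  · exact fun hv => ⟨ofFn N v, hv, ofFn_degree_lt v, toFn_comp_ofFn_eq_id N v⟩

theorem range_charmatrix_leftMulMatrix {d : ℕ} {θ : S} (b : Module.Basis (Fin d) R S)
    (hb : ∀ i, b i = θ ^ (i : ℕ)) (α : S) :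
    LinearMap.range (charmatrix (Algebra.leftMulMatrix b α)).mulVecLin =
      coeffVectors (relationIdeal R θ α) d := by
  rw [Algebra.leftMulMatrix_apply, ← ker_linearCombination_AEval'_of_basis b (Algebra.lmul R S α)]
  ext v
  rw [LinearMap.mem_ker, mem_coeffVectors_relationIdeal, Fintype.linearCombination_apply]
  simp only [← Module.AEval.of_aeval_smul, ← map_sum, LinearEquiv.map_eq_zero_iff]
  have aeval_lmul_smul (p : R[X]) (x : S) : aeval (Algebra.lmul R S α) p • x = aeval α p * x :=
    LinearMap.congr_fun (aeval_algHom_apply (Algebra.lmul R S) α p) x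
  simp only [aeval_lmul_smul, hb]

end PolynomialRelations

theorem associated_leadingCoeffGen_zero_minpoly {A : Type*} [CommRing A] [Algebra K A] (θ α : A) :
    Associated (leadingCoeffGen (relationIdeal K θ α) 0) (minpoly K α) := by
  have dvd_iff (p : K[X]) : leadingCoeffGen (relationIdeal K θ α) 0 ∣ p ↔ minpoly K α ∣ p := by
    rw [leadingCoeffGen_zero_dvd_iff, C_mem_relationIdeal, minpoly.dvd_iff]
  exact associated_of_dvd_dvd ((dvd_iff _).2 dvd_rfl) ((dvd_iff _).1 dvd_rfl)

section AdjoinRoot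

open AdjoinRoot

variable {f a : K[X]}

theorem isRelation_iff_mem_coeffVectors {m : ℕ} {v : Fin m → K[X]} :
    IsRelation f a v ↔ v ∈ coeffVectors (relationIdeal K (root f) (mk f a)) m := by
  rw [mem_coeffVectors_relationIdeal, IsRelation, relEval, ← mk_eq_zero, map_sum]
  have mk_term (i : Fin m) :
      mk f (X ^ (i : ℕ) * (v i).comp a) = aeval (mk f a) (v i) * root f ^ (i : ℕ) := by
    rw [map_mul, map_pow, mk_X, mul_comm, ← aeval_eq, aeval_comp, aeval_eq]
  simp only [mk_term]

theorem IsRelBasis.range_mulVecLin {m : ℕ} {B : Matrix (Fin m) (Fin m) K[X]}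
    (hB : IsRelBasis f a B) :
    LinearMap.range B.mulVecLin = coeffVectors (relationIdeal K (root f) (mk f a)) m := by
  rw [Matrix.range_mulVecLin]
  refine le_antisymm (Submodule.span_le.2 ?_) fun v hv =>
    hB.2 v (isRelation_iff_mem_coeffVectors.2 hv)
  rintro _ ⟨j, rfl⟩
  exact isRelation_iff_mem_coeffVectors.1 (hB.1.2 j)

theorem powerBasisAux_repr_mk (hf : f ≠ 0) (p : K[X]) (i : Fin f.natDegree) :
    (powerBasisAux hf).repr (mk f p) i = (p % f).coeff i := by
  have hmod : mk f p = ∑ k : Fin f.natDegree, (p % f).coeff k • powerBasisAux hf k := by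
    have hdeg : (p % f).degree < f.natDegree := by
      rw [← degree_eq_natDegree hf]
      exact EuclideanDomain.mod_lt p hf
    calc mk f p = mk f (p % f) :=
        mk_eq_mk.2 ⟨p / f, by rw [sub_eq_iff_eq_add', EuclideanDomain.mod_add_div]⟩
      _ = mk f (∑ k : Fin f.natDegree, monomial (k : ℕ) ((p % f).coeff k)) := by
        rw [sum_fin_monomial_coeff hdeg]
      _ = ∑ k : Fin f.natDegree, (p % f).coeff k • powerBasisAux hf k := by
        simp [powerBasisAux, ← C_mul_X_pow_eq_monomial, Algebra.smul_def]
  rw [hmod, Module.Basis.repr_sum_self]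

theorem mulMat_eq_leftMulMatrix (hf : f ≠ 0) :
    mulMat f a f.natDegree = Algebra.leftMulMatrix (powerBasisAux hf) (mk f a) := by
  ext i k
  have hk : powerBasisAux hf k = mk f (X ^ (k : ℕ)) := by simp [powerBasisAux]
  rw [Algebra.leftMulMatrix_eq_repr_mul, hk, ← map_mul, powerBasisAux_repr_mk, mulMat, mul_comm]

theorem range_charmatrix_mulMat (hf : f ≠ 0) :
    LinearMap.range (charmatrix (mulMat f a f.natDegree)).mulVecLin =
      coeffVectors (relationIdeal K (root f) (mk f a)) f.natDegree := by
  rw [mulMat_eq_leftMulMatrix hf]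
  exact range_charmatrix_leftMulMatrix _ (fun i => by simp [powerBasisAux]) _

theorem associated_leadingCoeffGen_zero_minpoly_mulMat (hf : f ≠ 0) :
    Associated (leadingCoeffGen (relationIdeal K (root f) (mk f a)) 0)
      (minpoly K (mulMat f a f.natDegree)) := by
  rw [mulMat_eq_leftMulMatrix hf, minpoly.algHom_eq _ (Algebra.leftMulMatrix_injective _)]
  exact associated_leadingCoeffGen_zero_minpoly _ _

theorem isUnit_leadingCoeffGen_relationIdeal (hf : f ≠ 0) :
    IsUnit (leadingCoeffGen (relationIdeal K (root f) (mk f a)) f.natDegree) := by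
  have hmem : f.map C ∈ relationIdeal K (root f) (mk f a) :=
    map_C_mem_relationIdeal.2 (by rw [aeval_eq, mk_self])
  have hdvd := leadingCoeffGen_dvd_coeff hmem natDegree_map_le
  rw [coeff_map, coeff_natDegree] at hdvd
  exact isUnit_of_dvd_unit hdvd (isUnit_C.2 (leadingCoeff_ne_zero.2 hf).isUnit)

end AdjoinRoot

theorem IsInvariantFactors.associated_leadingCoeffGen {I : Ideal K[X][X]} {N : ℕ}
    {M : Matrix (Fin N) (Fin N) K[X]} {σ : Fin N → K[X]} (hσ : IsInvariantFactors M σ)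
    (h0 : leadingCoeffGen I 0 ≠ 0) (hM : LinearMap.range M.mulVecLin = coeffVectors I N)
    (i : Fin N) : Associated (σ i) (leadingCoeffGen I i) := by
  obtain ⟨-, hdvd, U, V, hU, hV, h⟩ := hσ
  exact associated_leadingCoeffGen_of_mul_mul_eq_diagonal h0 hM hdvd hU hV h i

theorem upperTriangular_basis_diagonal_invariantFactors_general
    (n m : ℕ) (hn : 1 ≤ n) (hm : 1 ≤ m) (f a : K[X]) (hf : f.natDegree = n)
    (B : Matrix (Fin m) (Fin m) K[X])
    (hBtri : ∀ i j : Fin m, j < i → B i j = 0)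
    (hB : IsRelBasis f a B)
    (σ : Fin m → K[X]) (hσ : IsInvariantFactors B σ)
    (τ : Fin n → K[X]) (hτ : IsInvariantFactors (charmatrix (mulMat f a n)) τ) :
    (∃ c : Fin m → K, (∀ i, c i ≠ 0) ∧ ∀ i, B i i = C (c i) * σ i) ∧
    ∃ k : ℕ, 1 ≤ k ∧ k ≤ min m n ∧
      (∀ i : Fin m, (i : ℕ) < k ↔ 0 < (σ i).natDegree) ∧
      (∀ (i : Fin m) (hi : (i : ℕ) < n), σ i = τ ⟨i, hi⟩) ∧
      σ ⟨0, hm⟩ = minpoly K (mulMat f a n) := by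
  subst hf
  have hf0 : f ≠ 0 := ne_zero_of_natDegree_gt hn
  have : Nonempty (Fin f.natDegree) := ⟨⟨0, hn⟩⟩
  have hint : IsIntegral K (mulMat f a f.natDegree) := Matrix.isIntegral _
  have hmin := associated_leadingCoeffGen_zero_minpoly_mulMat (a := a) hf0
  have hb0 := hmin.symm.ne_zero_iff.1 (minpoly.ne_zero hint)
  have hσb := hσ.associated_leadingCoeffGen hb0 hB.range_mulVecLin
  have hτb := hτ.associated_leadingCoeffGen hb0 (range_charmatrix_mulMat hf0)
  have hBb := associated_diag_leadingCoeffGen hb0 hB.range_mulVecLin fun i j => hBtri i j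
  choose c hc0 hc using fun i => associated_iff_exists_C_mul.1 ((hσb i).trans (hBb i))
  obtain ⟨k, hkn, hk⟩ := exists_lt_iff_not_isUnit
    (fun _ _ => leadingCoeffGen_dvd_of_le _) (isUnit_leadingCoeffGen_relationIdeal (a := a) hf0)
  have h0k : 0 < k := (hk 0).2 (hmin.isUnit_iff.not.2 (minpoly.not_isUnit K _))
  refine ⟨⟨c, hc0, hc⟩, min m k, le_min hm h0k, min_le_min_left m hkn, fun i => ?_,
    fun i hi => eq_of_monic_of_associated (hσ.1 i) (hτ.1 _) ((hσb i).trans (hτb ⟨i, hi⟩).symm),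
    eq_of_monic_of_associated (hσ.1 _) (minpoly.monic hint) ((hσb ⟨0, hm⟩).trans hmin)⟩
  rw [natDegree_pos_iff_not_isUnit (hσ.1 i), (hσb i).isUnit_iff, ← hk, lt_min_iff,
    and_iff_right i.2]

theorem upperTriangular_basis_diagonal_invariantFactors
    (n m : ℕ) (hn : 1 ≤ n) (hm : 1 ≤ m) (f a : K[X]) (hf : f.natDegree = n)
    (ha : a.degree < (n : WithBot ℕ))
    (B : Matrix (Fin m) (Fin m) K[X])
    (hBtri : ∀ i j : Fin m, j < i → B i j = 0)
    (hB : IsRelBasis f a B)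
    (σ : Fin m → K[X]) (hσ : IsInvariantFactors B σ)
    (τ : Fin n → K[X]) (hτ : IsInvariantFactors (charmatrix (mulMat f a n)) τ) :
    (∃ c : Fin m → K, (∀ i, c i ≠ 0) ∧ ∀ i, B i i = C (c i) * σ i) ∧
    ∃ k : ℕ, 1 ≤ k ∧ ∃ hk : k ≤ min m n,
      (∀ i : Fin m, (i : ℕ) < k ↔ 0 < (σ i).natDegree) ∧
      (∀ (i : Fin m) (h : (i : ℕ) < k), σ i = τ ⟨(i : ℕ), by omega⟩) ∧
      σ ⟨0, hm⟩ = minpoly K (mulMat f a n) := by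
  obtain ⟨hc, k, h1k, hk, hpos, hστ, hmin⟩ :=
    upperTriangular_basis_diagonal_invariantFactors_general n m hn hm f a hf B hBtri hB σ hσ τ hτ
  exact ⟨hc, k, h1k, hk, hpos, fun i _ => hστ i _, hmin⟩
end
end

section
/- Let K be a field, f ∈ K[x] of degree n ≥ 1, a ∈ K[x] of degree < n, and ℓ, m ∈ {1, …, n}. A matrix D ∈ K[y]^{m×m} has columns forming a basis of the K[y]-module R_{ℓ,m}^{(a,f)} if and only if D is the denominator of some irreducible right fraction description N·D^{−1} of the rational matrix (I_ℓ 0)·(y·I_n − M_a)^{−1}·X ∈ K(y)^{ℓ×m}. Moreover, the denominator of any right fraction description of this matrix is a right multiple of any such D, i.e., equals D·W for some W ∈ K[y]^{m×m}. -/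
open Polynomial Matrix

noncomputable section

variable {K : Type*} [Field K]

/-- `v` represents an element of the truncated module of relations `R_{ℓ,m}^{(a,f)}`:
for every `k ≥ 0`, the coefficients of `x^0, …, x^(ℓ-1)` of `(a^k · r(x,a(x))) mod f` vanish. -/
def IsTruncRelation (f a : K[X]) (ℓ : ℕ) {m : ℕ} (v : Fin m → K[X]) : Prop :=
  ∀ (k j : ℕ), j < ℓ → ((a ^ k * relEval a v) % f).coeff j = 0

/-- The `n×m` matrix `X` whose top `m×m` block is the identity, over any `α`. -/
def Xup (α : Type*) [Zero α] [One α] (n m : ℕ) : Matrix (Fin n) (Fin m) α :=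
  fun i j => if (i : ℕ) = (j : ℕ) then 1 else 0

/-- The `ℓ×n` matrix `(I_ℓ 0)` whose left `ℓ×ℓ` block is the identity, over any `α`. -/
def projL (α : Type*) [Zero α] [One α] (ℓ n : ℕ) : Matrix (Fin ℓ) (Fin n) α :=
  fun i j => if (i : ℕ) = (j : ℕ) then 1 else 0

/-- The rational matrix `(I_ℓ 0) · (y I_n − M_a)⁻¹ · X ∈ K(y)^{ℓ×m}`. -/
def fracMat (f a : K[X]) (n ℓ m : ℕ) : Matrix (Fin ℓ) (Fin m) (RatFunc K) :=
  projL (RatFunc K) ℓ n *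
    ((charmatrix (mulMat f a n)).map (algebraMap K[X] (RatFunc K)))⁻¹ *
    Xup (RatFunc K) n m

/-- `v ∈ denom(F)`: every entry of `F·v` is a polynomial. -/
def memDenom {ℓ m : ℕ} (F : Matrix (Fin ℓ) (Fin m) (RatFunc K)) (v : Fin m → K[X]) : Prop :=
  ∀ i, ∃ p : K[X],
    F.mulVec (fun j => algebraMap K[X] (RatFunc K) (v j)) i = algebraMap K[X] (RatFunc K) p


/-- The columns of `D` form a basis of the truncated module of relations `R_{ℓ,m}^{(a,f)}`. -/
def IsTruncBasis (f a : K[X]) (ℓ : ℕ) {m : ℕ} (D : Matrix (Fin m) (Fin m) K[X]) : Prop :=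
  D.det ≠ 0 ∧ (∀ j, IsTruncRelation f a ℓ (fun i => D i j)) ∧
    ∀ v : Fin m → K[X], IsTruncRelation f a ℓ v →
      v ∈ Submodule.span K[X] (Set.range fun j => fun i => D i j)

/-- `N·D⁻¹` is a right fraction description of `F`. -/
def IsRightDesc {ℓ m : ℕ} (F : Matrix (Fin ℓ) (Fin m) (RatFunc K))
    (N : Matrix (Fin ℓ) (Fin m) K[X]) (D : Matrix (Fin m) (Fin m) K[X]) : Prop :=
  D.det ≠ 0 ∧ F * D.map (algebraMap K[X] (RatFunc K)) = N.map (algebraMap K[X] (RatFunc K))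

/-- The right fraction `N·D⁻¹` is irreducible: `N` and `D` are right coprime. -/
def IsIrreducibleRight {ℓ m : ℕ} (N : Matrix (Fin ℓ) (Fin m) K[X])
    (D : Matrix (Fin m) (Fin m) K[X]) : Prop :=
  ∃ (U : Matrix (Fin m) (Fin ℓ) K[X]) (V : Matrix (Fin m) (Fin m) K[X]), U * N + V * D = 1


/-!
Write `F = (I_ℓ 0) (y - M_a)⁻¹ X`. The relations turn out to be the denominators of `F`: the `v`
with `F v` polynomial. Dividing `X v` on the left by `y - M_a` leaves as constant remainder the
coefficient vector `w` of `r(x, a(x)) mod f`, so `F v` is polynomial if and only if the first `ℓ`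
entries of `u = (y - M_a)⁻¹ w` are. Now `s_k = (M_a ^ k u)_i` satisfies
`y s_k = s_{k+1} + (M_a ^ k w)_i` and, by Cayley–Hamilton, the linear recurrence given by the
characteristic polynomial `χ` of `M_a`. Hence `χ s_0` has degree `< deg χ` as soon as `s_0` is a
polynomial, and `s_0 = 0`; so `u_i` is a polynomial exactly when it vanishes, exactly when
`(M_a ^ k w)_i = 0` for all `k`.

The vectors `(p, v)` with `F v = p` are the kernel of a map into a torsion-free module, hence form a
direct summand of `K[y]^(ℓ+m)`: a description `N D⁻¹` is irreducible if and only if the columns of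
`(N; D)` generate this summand, that is, if and only if those of `D` generate all denominators.
-/

theorem ringHom_comp_mulVec {R S ι κ : Type*} [NonAssocSemiring R] [NonAssocSemiring S]
    [Fintype κ] (φ : R →+* S) (A : Matrix ι κ R) (v : κ → R) :
    φ ∘ (A *ᵥ v) = A.map φ *ᵥ (φ ∘ v) :=
  funext (φ.map_mulVec A v)

theorem exists_comp_eq_id_of_exact {R M P Q : Type*} [CommRing R] [IsDomain R]
    [IsPrincipalIdealRing R] [AddCommGroup M] [Module R M] [AddCommGroup P] [Module R P]
    [Module.Finite R P] [AddCommGroup Q] [Module R Q] [Module.IsTorsionFree R Q] {b : M →ₗ[R] P}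
    {g : P →ₗ[R] Q} (hb : Function.Injective b) (hbg : Function.Exact b g) :
    ∃ l : P →ₗ[R] M, l ∘ₗ b = LinearMap.id := by
  have hexact : Function.Exact b g.rangeRestrict := fun x => by
    rw [← hbg x, ← Subtype.coe_inj, LinearMap.codRestrict_apply, ZeroMemClass.coe_zero]
  have hsplit := hexact.split_tfae'.out 0 1
  exact (hsplit.1 ⟨hb, Module.projective_lifting_property g.rangeRestrict LinearMap.id
    g.surjective_rangeRestrict⟩).2

section DenominatorModule

variable {R L ι κ μ : Type*} [CommRing R] [CommRing L] [Algebra R L] [Fintype κ] [Fintype μ]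

/-- The module `{v ∈ R^κ | F v ∈ R^ι}` of denominators of a matrix `F` over an extension `L` of
`R`. For `R = K[y]` and `L = K(y)`, the columns of the denominator of a right fraction description
of `F` belong to it. -/
def denominatorModule (R : Type*) [CommRing R] [Algebra R L] (F : Matrix ι κ L) :
    Submodule R (κ → R) :=
  (LinearMap.range ((Algebra.linearMap R L).compLeft ι)).comap
    (F.mulVecLin.restrictScalars R ∘ₗ (Algebra.linearMap R L).compLeft κ)

theorem mem_denominatorModule {F : Matrix ι κ L} {v : κ → R} :
    v ∈ denominatorModule R F ↔ ∃ p : ι → R, F *ᵥ (algebraMap R L ∘ v) = algebraMap R L ∘ p :=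
  exists_congr fun _ => eq_comm

theorem mem_denominatorModule_iff_forall {F : Matrix ι κ L} {v : κ → R} :
    v ∈ denominatorModule R F ↔ ∀ i, (F *ᵥ (algebraMap R L ∘ v)) i ∈ (algebraMap R L).range := by
  simp only [mem_denominatorModule, funext_iff, RingHom.mem_range, Classical.skolem,
    Function.comp_apply, eq_comm]

theorem range_mulVecLin_le_iff_exists_eq_mul {D : Matrix ι κ R} {D' : Matrix ι μ R} :
    LinearMap.range D'.mulVecLin ≤ LinearMap.range D.mulVecLin ↔
      ∃ W : Matrix κ μ R, D' = D * W := by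
  constructor
  · rw [range_mulVecLin, Submodule.span_le, Set.range_subset_iff]
    intro h
    choose W hW using h
    exact ⟨of fun i j => W j i, ext fun i j => (congrFun (hW j) i).symm⟩
  · rintro ⟨W, rfl⟩
    rw [mulVecLin_mul]
    exact LinearMap.range_comp_le_range _ _

theorem range_mulVecLin_le_denominatorModule_iff {F : Matrix ι κ L} {D : Matrix κ μ R} :
    LinearMap.range D.mulVecLin ≤ denominatorModule R F ↔
      ∃ N : Matrix ι μ R, F * D.map (algebraMap R L) = N.map (algebraMap R L) := by
  rw [range_mulVecLin, Submodule.span_le, Set.range_subset_iff]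
  simp only [SetLike.mem_coe, mem_denominatorModule]
  constructor
  · intro h
    choose N hN using h
    exact ⟨of fun i j => N j i, ext fun i j => congrFun (hN j) i⟩
  · rintro ⟨N, hN⟩ j
    exact ⟨N.col j, funext fun i => congrFun (congrFun hN i) j⟩

theorem mulVec_algebraMap_comp_mulVec {F : Matrix ι κ L} {N : Matrix ι μ R} {D : Matrix κ μ R}
    (hN : F * D.map (algebraMap R L) = N.map (algebraMap R L)) (c : μ → R) :
    F *ᵥ (algebraMap R L ∘ (D *ᵥ c)) = algebraMap R L ∘ (N *ᵥ c) := by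
  rw [ringHom_comp_mulVec, mulVec_mulVec, hN, ringHom_comp_mulVec]

variable [DecidableEq κ]

theorem denominatorModule_le_range_mulVecLin [IsDomain R] [FaithfulSMul R L] [Fintype ι]
    {F : Matrix ι κ L} {N : Matrix ι κ R} {D : Matrix κ κ R} (hD : D.det ≠ 0)
    (hN : F * D.map (algebraMap R L) = N.map (algebraMap R L))
    {U : Matrix κ ι R} {V : Matrix κ κ R} (hUV : U * N + V * D = 1) :
    denominatorModule R F ≤ LinearMap.range D.mulVecLin := by
  intro v hv
  obtain ⟨p, hp⟩ := mem_denominatorModule.1 hv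
  obtain ⟨y, hDy⟩ : ∃ y, D *ᵥ y = D.det • v :=
    ⟨D.adjugate *ᵥ v, by rw [mulVec_mulVec, mul_adjugate, smul_mulVec, one_mulVec]⟩
  have hNy : N *ᵥ y = D.det • p := by
    refine (FaithfulSMul.algebraMap_injective R L).comp_left ?_
    calc algebraMap R L ∘ (N *ᵥ y)
        = F *ᵥ (algebraMap R L ∘ (D.det • v)) := by rw [← hDy, mulVec_algebraMap_comp_mulVec hN]
      _ = F *ᵥ (algebraMap R L D.det • (algebraMap R L ∘ v)) := by congr 1; ext j; simp
      _ = algebraMap R L ∘ (D.det • p) := by rw [mulVec_smul, hp]; ext i; simp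
  have hy : D.det • (U *ᵥ p + V *ᵥ v) = y :=
    calc D.det • (U *ᵥ p + V *ᵥ v) = U *ᵥ (N *ᵥ y) + V *ᵥ (D *ᵥ y) := by
          rw [hNy, hDy, mulVec_smul, mulVec_smul, smul_add]
      _ = y := by rw [mulVec_mulVec, mulVec_mulVec, ← add_mulVec, hUV, one_mulVec]
  refine ⟨U *ᵥ p + V *ᵥ v, smul_right_injective _ hD ?_⟩
  change D.det • (D *ᵥ (U *ᵥ p + V *ᵥ v)) = D.det • v
  rw [← mulVec_smul, hy, hDy]

theorem exists_mul_add_mul_eq_one_of_denominatorModule_le [IsDomain R]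
    [IsPrincipalIdealRing R] [IsDomain L] [FaithfulSMul R L] [Fintype ι] {F : Matrix ι κ L}
    {N : Matrix ι κ R} {D : Matrix κ κ R} (hD : D.det ≠ 0)
    (hN : F * D.map (algebraMap R L) = N.map (algebraMap R L))
    (hle : denominatorModule R F ≤ LinearMap.range D.mulVecLin) :
    ∃ (U : Matrix κ ι R) (V : Matrix κ κ R), U * N + V * D = 1 := by
  classical
  let b : (κ → R) →ₗ[R] (ι → R) × (κ → R) := N.mulVecLin.prod D.mulVecLin
  let g : (ι → R) × (κ → R) →ₗ[R] (ι → L) :=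
    ((F.mulVecLin.restrictScalars R ∘ₗ (Algebra.linearMap R L).compLeft κ) ∘ₗ LinearMap.snd R _ _) -
      (Algebra.linearMap R L).compLeft ι ∘ₗ LinearMap.fst R _ _
  have hg (p : ι → R) (v : κ → R) :
      g (p, v) = 0 ↔ F *ᵥ (algebraMap R L ∘ v) = algebraMap R L ∘ p := sub_eq_zero
  have hexact : Function.Exact b g := by
    rintro ⟨p, v⟩
    rw [hg]
    constructor
    · intro hp
      obtain ⟨c, rfl⟩ := hle (mem_denominatorModule.2 ⟨p, hp⟩)
      refine ⟨c, Prod.ext ((FaithfulSMul.algebraMap_injective R L).comp_left ?_) rfl⟩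
      exact (mulVec_algebraMap_comp_mulVec hN c).symm.trans hp
    · rintro ⟨c, hc⟩
      obtain ⟨rfl, rfl⟩ := Prod.ext_iff.1 hc
      exact mulVec_algebraMap_comp_mulVec hN c
  have hinj : Function.Injective b := fun c c' h =>
    mulVec_injective_of_det_ne_zero hD (congrArg Prod.snd h)
  obtain ⟨l, hl⟩ := exists_comp_eq_id_of_exact hinj hexact
  refine ⟨LinearMap.toMatrix' (l ∘ₗ LinearMap.inl R _ _),
    LinearMap.toMatrix' (l ∘ₗ LinearMap.inr R _ _), mulVec_injective (funext fun c => ?_)⟩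
  rw [add_mulVec, ← mulVec_mulVec, ← mulVec_mulVec, LinearMap.toMatrix'_mulVec,
    LinearMap.toMatrix'_mulVec, one_mulVec, LinearMap.comp_apply, LinearMap.comp_apply, ← map_add]
  simpa [b] using LinearMap.congr_fun hl c

theorem range_mulVecLin_eq_denominatorModule_iff [IsDomain R] [IsPrincipalIdealRing R]
    [IsDomain L] [FaithfulSMul R L] [Fintype ι] {F : Matrix ι κ L} {D : Matrix κ κ R}
    (hD : D.det ≠ 0) :
    LinearMap.range D.mulVecLin = denominatorModule R F ↔
      ∃ N : Matrix ι κ R, F * D.map (algebraMap R L) = N.map (algebraMap R L) ∧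
        ∃ (U : Matrix κ ι R) (V : Matrix κ κ R), U * N + V * D = 1 := by
  rw [le_antisymm_iff, range_mulVecLin_le_denominatorModule_iff]
  constructor
  · rintro ⟨⟨N, hN⟩, hle⟩
    exact ⟨N, hN, exists_mul_add_mul_eq_one_of_denominatorModule_le hD hN hle⟩
  · rintro ⟨N, hN, U, V, hUV⟩
    exact ⟨⟨N, hN⟩, denominatorModule_le_range_mulVecLin hD hN hUV⟩

end DenominatorModule

section Resolvent

variable {R L ι κ : Type*} [CommRing R] [CommRing L] [Algebra R L] [Algebra R[X] L]
  [IsScalarTower R R[X] L]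

theorem X_pow_mul_sub_mem_degreeLT {s : ℕ → R[X]} {c : ℕ → R}
    (hs : ∀ k, X * s k = s (k + 1) + C (c k)) (k : ℕ) :
    X ^ k * s 0 - s k ∈ degreeLT R k := by
  induction k with
  | zero => simp
  | succ k ih =>
    have hsplit : X ^ (k + 1) * s 0 - s (k + 1) = X * (X ^ k * s 0 - s k) + C (c k) := by
      linear_combination hs k
    rw [mem_degreeLT, degree_lt_iff_coeff_zero] at ih ⊢
    rintro (_ | j) hj
    · exact absurd hj (by simp)
    · rw [hsplit, coeff_add, coeff_X_mul, ih j (Nat.succ_le_succ_iff.1 hj), coeff_C_succ, add_zero]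

theorem eq_zero_of_X_mul_eq_succ_add_C {p : R[X]} (hp : p.Monic) {s : ℕ → R[X]} {c : ℕ → R}
    (hs : ∀ k, X * s k = s (k + 1) + C (c k))
    (hrec : ∑ j ∈ Finset.range (p.natDegree + 1), p.coeff j • s j = 0) : s 0 = 0 := by
  have hmul : p * s 0 =
      ∑ j ∈ Finset.range (p.natDegree + 1), p.coeff j • (X ^ j * s 0 - s j) := by
    simp only [smul_sub, Finset.sum_sub_distrib, hrec, sub_zero]
    conv_lhs => rw [p.as_sum_range_C_mul_X_pow, Finset.sum_mul]
    simp only [smul_eq_C_mul, mul_assoc]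
  have hmem : p * s 0 ∈ degreeLT R p.natDegree := by
    rw [hmul]
    refine Submodule.sum_mem _ fun j hj => Submodule.smul_mem _ _ ?_
    exact degreeLT_mono (Finset.mem_range_succ_iff.1 hj) (X_pow_mul_sub_mem_degreeLT hs j)
  by_contra h0
  refine hp.not_dvd_of_degree_lt (mt hp.mul_right_eq_zero_iff.1 h0) ?_ (dvd_mul_right p (s 0))
  exact (mem_degreeLT.1 hmem).trans_eq (degree_eq_natDegree (hp.ne_zero_of_polynomial_ne h0)).symm

theorem forall_eq_zero_of_mem_range_algebraMap [FaithfulSMul R[X] L] {p : R[X]} (hp : p.Monic)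
    {s : ℕ → L} {c : ℕ → R} (hs : ∀ k, (X : R[X]) • s k = s (k + 1) + algebraMap R L (c k))
    (hrec : ∀ k, ∑ j ∈ Finset.range (p.natDegree + 1), p.coeff j • s (k + j) = 0)
    (h0 : s 0 ∈ (algebraMap R[X] L).range) (k : ℕ) : c k = 0 := by
  have hinj := FaithfulSMul.algebraMap_injective R[X] L
  have hpoly (k : ℕ) : ∃ t : R[X], algebraMap R[X] L t = s k := by
    induction k with
    | zero => exact h0
    | succ k ih =>
      obtain ⟨t, ht⟩ := ih
      refine ⟨X * t - C (c k), ?_⟩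
      rw [← algebraMap_eq, map_sub, map_mul, ht, ← IsScalarTower.algebraMap_apply,
        sub_eq_iff_eq_add, ← hs, Algebra.smul_def]
  choose t ht using hpoly
  have htstep (k : ℕ) : X * t k = t (k + 1) + C (c k) := hinj <| by
    rw [← algebraMap_eq, map_mul, map_add, ht, ht, ← Algebra.smul_def, hs,
      ← IsScalarTower.algebraMap_apply]
  have htrec (k : ℕ) : ∑ j ∈ Finset.range (p.natDegree + 1), p.coeff j • t (k + j) = 0 :=
    hinj <| by
      simp only [map_sum, map_zero, ← IsScalarTower.coe_toAlgHom' R R[X] L, map_smul]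
      simpa only [IsScalarTower.coe_toAlgHom', ht] using hrec k
  have htzero (k : ℕ) : t k = 0 :=
    eq_zero_of_X_mul_eq_succ_add_C hp (s := fun j => t (k + j)) (fun j => htstep (k + j)) (htrec k)
  exact C_eq_zero.1 (by simpa [htzero] using (htstep k).symm)

theorem eq_zero_of_X_smul_eq_succ [IsDomain L] [FaithfulSMul R[X] L] {p : R[X]} (hp : p.Monic)
    {s : ℕ → L} (hs : ∀ k, (X : R[X]) • s k = s (k + 1))
    (hrec : ∑ j ∈ Finset.range (p.natDegree + 1), p.coeff j • s j = 0) : s 0 = 0 := by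
  have hpow (k : ℕ) : s k = (X ^ k : R[X]) • s 0 := by
    induction k with
    | zero => simp
    | succ k ih => rw [pow_succ', mul_smul, ← ih, hs]
  have hps : algebraMap R[X] L p * s 0 = 0 := by
    rw [← hrec, ← Algebra.smul_def]
    conv_lhs => rw [p.as_sum_range_C_mul_X_pow, Finset.sum_smul]
    refine Finset.sum_congr rfl fun j _ => ?_
    rw [hpow j, ← smul_eq_C_mul, smul_assoc]
  have : Nontrivial R := (algebraMap R L).domain_nontrivial
  have hp0 : algebraMap R[X] L p ≠ 0 :=
    (map_ne_zero_iff _ (FaithfulSMul.algebraMap_injective R[X] L)).2 hp.ne_zero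
  exact (mul_eq_zero.1 hps).resolve_left hp0

variable [Fintype ι] [DecidableEq ι]

theorem mem_range_algebraMap_iff_forall_pow_mulVec_eq_zero [IsDomain L] [FaithfulSMul R[X] L]
    {M : Matrix ι ι R} {u : ι → L} {w : ι → R}
    (hu : (X : R[X]) • u = M.map (algebraMap R L) *ᵥ u + algebraMap R L ∘ w) (i : ι) :
    u i ∈ (algebraMap R[X] L).range ↔ ∀ k, (M ^ k *ᵥ w) i = 0 := by
  set A : Matrix ι ι L := M.map (algebraMap R L)
  have hs (k : ℕ) : (X : R[X]) • (A ^ k *ᵥ u) i =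
      (A ^ (k + 1) *ᵥ u) i + algebraMap R L ((M ^ k *ᵥ w) i) := by
    have hvec : (X : R[X]) • (A ^ k *ᵥ u) = A ^ (k + 1) *ᵥ u + algebraMap R L ∘ (M ^ k *ᵥ w) := by
      rw [← mulVec_smul, hu, mulVec_add, mulVec_mulVec, ← pow_succ, ringHom_comp_mulVec,
        Matrix.map_pow]
    exact congrFun hvec i
  have hcayley : aeval A M.charpoly = 0 := by
    have := aeval_algHom_apply (Algebra.ofId R L).mapMatrix M M.charpoly
    rwa [aeval_self_charpoly, map_zero] at this
  have hrec (k : ℕ) : ∑ j ∈ Finset.range (M.charpoly.natDegree + 1),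
      M.charpoly.coeff j • (A ^ (k + j) *ᵥ u) i = 0 := by
    have hvec : (A ^ k * aeval A M.charpoly) *ᵥ u = 0 := by rw [hcayley, mul_zero, zero_mulVec]
    rw [aeval_eq_sum_range, Finset.mul_sum, sum_mulVec] at hvec
    simpa only [Finset.sum_apply, mul_smul_comm, ← pow_add, smul_mulVec, Pi.smul_apply,
      Pi.zero_apply] using congrFun hvec i
  constructor
  · intro hui
    exact forall_eq_zero_of_mem_range_algebraMap M.charpoly_monic hs hrec (by simpa using hui)
  · intro hw
    have hstep (k : ℕ) : (X : R[X]) • (A ^ k *ᵥ u) i = (A ^ (k + 1) *ᵥ u) i := by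
      rw [hs, hw, map_zero, add_zero]
    have hzero := eq_zero_of_X_smul_eq_succ M.charpoly_monic hstep (by simpa using hrec 0)
    rw [pow_zero, one_mulVec] at hzero
    exact hzero ▸ zero_mem _

theorem sub_dvd_aeval_sub_aeval {A : Type*} [Ring A] [Algebra R A] {x y : A} (h : Commute x y)
    (p : R[X]) : x - y ∣ aeval x p - aeval y p := by
  rw [aeval_eq_sum_range, aeval_eq_sum_range, ← Finset.sum_sub_distrib]
  refine Finset.dvd_sum fun k _ => ?_
  rw [← smul_sub]
  exact dvd_smul_of_dvd _ (h.sub_dvd_pow_sub_pow k)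

theorem charmatrix_dvd_scalar_sub_aeval_map_C (M : Matrix ι ι R) (p : R[X]) :
    charmatrix M ∣ scalar ι p - (aeval M p).map C := by
  have hdvd := sub_dvd_aeval_sub_aeval
    (scalar_commute (n := ι) (X : R[X]) (Commute.all _) ((CAlgHom (R := R)).mapMatrix M)) p
  have hscalar : aeval (scalar ι (X : R[X])) p = scalar ι p := by
    simpa using aeval_algHom_apply (scalarAlgHom ι R) (X : R[X]) p
  rwa [hscalar, aeval_algHom_apply] at hdvd

theorem exists_map_C_mulVec_eq_charmatrix_mulVec_add [Fintype κ] (M : Matrix ι ι R)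
    (W : Matrix ι κ R) (v : κ → R[X]) :
    ∃ q : ι → R[X],
      W.map C *ᵥ v = charmatrix M *ᵥ q + C ∘ ∑ j, aeval M (v j) *ᵥ W.col j := by
  choose Q hQ using fun j => charmatrix_dvd_scalar_sub_aeval_map_C M (v j)
  have hcol (j : κ) : v j • (W.map C).col j =
      charmatrix M *ᵥ (Q j *ᵥ (C ∘ W.col j)) + C ∘ (aeval M (v j) *ᵥ W.col j) := by
    rw [mulVec_mulVec, ← hQ, sub_mulVec, ringHom_comp_mulVec, sub_add_cancel]
    ext1 i
    simp [mulVec_diagonal]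
  refine ⟨∑ j, Q j *ᵥ (C ∘ W.col j), ?_⟩
  have hcomp : C ∘ ∑ j, aeval M (v j) *ᵥ W.col j = ∑ j, C ∘ (aeval M (v j) *ᵥ W.col j) := by
    ext1 i
    simp
  rw [mulVec_sum, hcomp, ← Finset.sum_add_distrib, mulVec_eq_sum]
  exact Finset.sum_congr rfl fun j _ => (op_smul_eq_smul _ _).trans (hcol j)

theorem X_smul_eq_mulVec_add_of_charmatrix_mulVec_eq {M : Matrix ι ι R} {u w : ι → L}
    (hu : (charmatrix M).map (algebraMap R[X] L) *ᵥ u = w) :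
    (X : R[X]) • u = M.map (algebraMap R L) *ᵥ u + w := by
  have hA : (charmatrix M).map (algebraMap R[X] L) =
      scalar ι (algebraMap R[X] L X) - M.map (algebraMap R L) := by
    ext i j
    simp [charmatrix, diagonal_apply, apply_ite (algebraMap R[X] L),
      IsScalarTower.algebraMap_apply R R[X] L]
  rw [← hu, hA, sub_mulVec, add_sub_cancel]
  ext1 i
  simp [mulVec_diagonal, Algebra.smul_def]

end Resolvent

section CharmatrixInverse

theorem isUnit_det_map_charmatrix {R L ι : Type*} [CommRing R] [Field L] [Algebra R[X] L]
    [FaithfulSMul R[X] L] [Fintype ι] [DecidableEq ι] (M : Matrix ι ι R) :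
    IsUnit ((charmatrix M).map (algebraMap R[X] L)).det := by
  have : Nontrivial R := ((algebraMap R[X] L).comp C).domain_nontrivial
  have hdet : ((charmatrix M).map (algebraMap R[X] L)).det = algebraMap R[X] L M.charpoly :=
    (RingHom.map_det _ _).symm
  rw [hdet, isUnit_iff_ne_zero, map_ne_zero_iff _ (FaithfulSMul.algebraMap_injective R[X] L)]
  exact M.charpoly_monic.ne_zero

variable {R L ι κ : Type*} [CommRing R] [Field L] [Algebra R L] [Algebra R[X] L]
  [IsScalarTower R R[X] L] [FaithfulSMul R[X] L] [Fintype ι] [DecidableEq ι] [Fintype κ]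

theorem charmatrix_inv_mulVec_mem_range_iff (M : Matrix ι ι R) (W : Matrix ι κ R) (v : κ → R[X])
    (i : ι) :
    (((charmatrix M).map (algebraMap R[X] L))⁻¹ *ᵥ (algebraMap R[X] L ∘ (W.map C *ᵥ v))) i ∈
        (algebraMap R[X] L).range ↔
      ∀ k, (M ^ k *ᵥ ∑ j, aeval M (v j) *ᵥ W.col j) i = 0 := by
  obtain ⟨q, hq⟩ := exists_map_C_mulVec_eq_charmatrix_mulVec_add M W v
  set w := ∑ j, aeval M (v j) *ᵥ W.col j
  set A := (charmatrix M).map (algebraMap R[X] L)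
  have hdet : IsUnit A.det := isUnit_det_map_charmatrix M
  set u := A⁻¹ *ᵥ (algebraMap R L ∘ w)
  have hAu : A *ᵥ u = algebraMap R L ∘ w := by
    rw [mulVec_mulVec, mul_nonsing_inv A hdet, one_mulVec]
  have hw : algebraMap R[X] L ∘ (C ∘ w) = algebraMap R L ∘ w :=
    funext fun i => (IsScalarTower.algebraMap_apply R R[X] L (w i)).symm
  have hadd : algebraMap R[X] L ∘ (W.map C *ᵥ v) = A *ᵥ (algebraMap R[X] L ∘ q + u) := by
    rw [mulVec_add, hAu, ← ringHom_comp_mulVec, ← hw, hq]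
    exact funext fun i => map_add _ _ _
  rw [hadd, mulVec_mulVec, nonsing_inv_mul A hdet, one_mulVec,
    ← mem_range_algebraMap_iff_forall_pow_mulVec_eq_zero
      (X_smul_eq_mulVec_add_of_charmatrix_mulVec_eq hAu)]
  exact add_mem_cancel_left (RingHom.mem_range_self _ (q i))

end CharmatrixInverse

section Quotient

/-- The vector of the first `n` coefficients of the remainder `r mod f`, i.e. the coordinates of
`r` in the basis `1, x, …, x^(n-1)` of `K[x]/⟨f⟩` when `f` has degree `n`. It is linear in `r`;
dividing by the monic multiple of `f` does not change the remainder. -/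
def modCoeffs (f : K[X]) (n : ℕ) : K[X] →ₗ[K] Fin n → K :=
  toFn n ∘ₗ modByMonicHom (f * C f.leadingCoeff⁻¹)

theorem modCoeffs_apply (f : K[X]) (n : ℕ) (r : K[X]) (i : Fin n) :
    modCoeffs f n r i = (r % f).coeff i := by
  rw [mod_def]
  rfl

theorem modCoeffs_mod_mul (f : K[X]) (n : ℕ) (r s : K[X]) :
    modCoeffs f n (r % f * s) = modCoeffs f n (r * s) := by
  ext i
  have hdvd : f ∣ r % f * s - r * s :=
    ⟨-(r / f * s), by linear_combination s * EuclideanDomain.div_add_mod r f⟩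
  rw [modCoeffs_apply, modCoeffs_apply, mod_eq_of_dvd_sub hdvd]

variable {f : K[X]} {n : ℕ}

theorem coeff_mod_eq_zero (hf : f.degree = n) (r : K[X]) {j : ℕ} (hj : n ≤ j) :
    (r % f).coeff j = 0 :=
  coeff_eq_zero_of_degree_lt <|
    (degree_mod_lt r (ne_zero_of_coe_le_degree hf.ge)).trans_le (hf ▸ Nat.cast_le.2 hj)

theorem mulMat_mulVec_modCoeffs (hf : f.degree = n) (a r : K[X]) :
    mulMat f a n *ᵥ modCoeffs f n r = modCoeffs f n (a * r) := by
  have h0 : f ≠ 0 := ne_zero_of_coe_le_degree hf.ge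
  have hr : r % f = ∑ k : Fin n, C (modCoeffs f n r k) * X ^ (k : ℕ) := by
    simp only [modCoeffs_apply]
    rw [sum_fin (fun k c => C c * X ^ k) (by simp) (hf ▸ degree_mod_lt r h0), sum_C_mul_X_pow_eq]
  have hcol (k : Fin n) : (mulMat f a n).col k = modCoeffs f n (X ^ (k : ℕ) * a) :=
    funext fun i => (modCoeffs_apply f n _ i).symm
  calc mulMat f a n *ᵥ modCoeffs f n r
      = ∑ k, modCoeffs f n r k • modCoeffs f n (X ^ (k : ℕ) * a) := by
        simp only [mulVec_eq_sum, op_smul_eq_smul, ← hcol]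
        rfl
    _ = modCoeffs f n (r % f * a) := by
        conv_rhs => rw [hr]
        simp only [Finset.sum_mul, ← smul_eq_C_mul, smul_mul_assoc, map_sum, map_smul]
    _ = modCoeffs f n (a * r) := by rw [modCoeffs_mod_mul, mul_comm]

theorem mulMat_pow_mulVec_modCoeffs (hf : f.degree = n) (a r : K[X]) (k : ℕ) :
    mulMat f a n ^ k *ᵥ modCoeffs f n r = modCoeffs f n (a ^ k * r) := by
  induction k with
  | zero => simp
  | succ k ih =>
    rw [pow_succ', ← mulVec_mulVec, ih, mulMat_mulVec_modCoeffs hf, pow_succ', mul_assoc]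

theorem aeval_mulMat_mulVec_modCoeffs (hf : f.degree = n) (a r p : K[X]) :
    aeval (mulMat f a n) p *ᵥ modCoeffs f n r = modCoeffs f n (r * p.comp a) := by
  induction p using Polynomial.induction_on' with
  | add p q hp hq => rw [map_add, add_mulVec, hp, hq, add_comp, mul_add, map_add]
  | monomial k c =>
    rw [← C_mul_X_pow_eq_monomial, ← smul_eq_C_mul, map_smul, map_pow, aeval_X, smul_mulVec,
      mulMat_pow_mulVec_modCoeffs hf, ← map_smul, smul_comp, X_pow_comp, mul_smul_comm, mul_comm]

theorem modCoeffs_X_pow (hf : f.degree = n) {j : ℕ} (hj : j < n) :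
    modCoeffs f n (X ^ j) = Pi.single ⟨j, hj⟩ 1 := by
  ext i
  rw [modCoeffs_apply, (mod_eq_self_iff (ne_zero_of_coe_le_degree hf.ge)).2]
  · simp [coeff_X_pow, Pi.single_apply, Fin.ext_iff]
  · rw [degree_X_pow, hf]
    exact Nat.cast_lt.2 hj

theorem Xup_col {m : ℕ} (hf : f.degree = n) (hmn : m ≤ n) (j : Fin m) :
    (Xup K n m).col j = modCoeffs f n (X ^ (j : ℕ)) := by
  rw [modCoeffs_X_pow hf (j.2.trans_le hmn)]
  ext i
  simp [Xup, Pi.single_apply, Fin.ext_iff]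

theorem sum_aeval_mulMat_mulVec_Xup_col {m : ℕ} (hf : f.degree = n) (hmn : m ≤ n) (a : K[X])
    (v : Fin m → K[X]) :
    ∑ j, aeval (mulMat f a n) (v j) *ᵥ (Xup K n m).col j = modCoeffs f n (relEval a v) := by
  simp only [Xup_col hf hmn, aeval_mulMat_mulVec_modCoeffs hf, relEval, map_sum]

end Quotient

section FractionMatrix

theorem map_Xup {R S : Type*} [NonAssocSemiring R] [NonAssocSemiring S] (φ : R →+* S) (n m : ℕ) :
    (Xup R n m).map φ = Xup S n m := by
  ext i j
  simp [Xup, apply_ite φ]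

theorem projL_mulVec {R : Type*} [NonAssocSemiring R] {ℓ n : ℕ} (u : Fin n → R) (i : Fin ℓ) :
    (projL R ℓ n *ᵥ u) i = if h : (i : ℕ) < n then u ⟨i, h⟩ else 0 := by
  rw [mulVec, dotProduct]
  split_ifs with h
  · refine (Finset.sum_eq_single ⟨i, h⟩ (fun j _ hj => ?_) (by simp)).trans (by simp [projL])
    rw [projL, if_neg fun hij => hj (Fin.ext hij.symm), zero_mul]
  · refine Finset.sum_eq_zero fun j _ => ?_
    rw [projL, if_neg fun hij : (i : ℕ) = j => h (hij.trans_lt j.2), zero_mul]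

theorem fracMat_mulVec (f a : K[X]) (n ℓ m : ℕ) (v : Fin m → K[X]) :
    fracMat f a n ℓ m *ᵥ (algebraMap K[X] (RatFunc K) ∘ v) =
      projL (RatFunc K) ℓ n *ᵥ
        (((charmatrix (mulMat f a n)).map (algebraMap K[X] (RatFunc K)))⁻¹ *ᵥ
          (algebraMap K[X] (RatFunc K) ∘ ((Xup K n m).map C *ᵥ v))) := by
  rw [fracMat, ← mulVec_mulVec, ← mulVec_mulVec, ringHom_comp_mulVec, map_Xup, map_Xup]

variable {f : K[X]} {n ℓ m : ℕ}

theorem isTruncRelation_iff_mem_denominatorModule (hf : f.degree = n) (hmn : m ≤ n) (a : K[X])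
    (v : Fin m → K[X]) :
    IsTruncRelation f a ℓ v ↔ v ∈ denominatorModule K[X] (fracMat f a n ℓ m) := by
  have hswap : IsTruncRelation f a ℓ v ↔
      ∀ j < ℓ, ∀ k, ((a ^ k * relEval a v) % f).coeff j = 0 :=
    ⟨fun h j hj k => h k j hj, fun h k j hj => h j hj k⟩
  rw [hswap, mem_denominatorModule_iff_forall, fracMat_mulVec, Fin.forall_iff]
  refine forall₂_congr fun j hj => ?_
  rw [projL_mulVec]
  split_ifs with hjn
  · simp only [charmatrix_inv_mulVec_mem_range_iff, sum_aeval_mulMat_mulVec_Xup_col hf hmn,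
      mulMat_pow_mulVec_modCoeffs hf, modCoeffs_apply]
  · exact iff_of_true (fun k => coeff_mod_eq_zero hf _ (not_lt.1 hjn)) (zero_mem _)

theorem isTruncBasis_iff_range_mulVecLin_eq (hf : f.degree = n) (hmn : m ≤ n) (a : K[X])
    (D : Matrix (Fin m) (Fin m) K[X]) :
    IsTruncBasis f a ℓ D ↔ D.det ≠ 0 ∧
      LinearMap.range D.mulVecLin = denominatorModule K[X] (fracMat f a n ℓ m) := by
  simp only [IsTruncBasis, isTruncRelation_iff_mem_denominatorModule hf hmn]
  rw [le_antisymm_iff, range_mulVecLin, Submodule.span_le, Set.range_subset_iff]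
  rfl

end FractionMatrix

theorem truncBasis_iff_irreducible_denominator_general (n ℓ m : ℕ) (hmn : m ≤ n) (f a : K[X])
    (hf : f.degree = n) (D : Matrix (Fin m) (Fin m) K[X]) :
    (IsTruncBasis f a ℓ D ↔
      ∃ N, IsRightDesc (fracMat f a n ℓ m) N D ∧ IsIrreducibleRight N D) ∧
    (IsTruncBasis f a ℓ D →
      ∀ (N' : Matrix (Fin ℓ) (Fin m) K[X]) (D' : Matrix (Fin m) (Fin m) K[X]),
        IsRightDesc (fracMat f a n ℓ m) N' D' →
          ∃ W : Matrix (Fin m) (Fin m) K[X], D' = D * W) := by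
  rw [isTruncBasis_iff_range_mulVecLin_eq hf hmn]
  constructor
  · simp only [IsRightDesc, IsIrreducibleRight, and_assoc, exists_and_left]
    exact and_congr_right range_mulVecLin_eq_denominatorModule_iff
  · rintro ⟨-, hD⟩ N' D' ⟨-, hN'⟩
    rw [← range_mulVecLin_le_iff_exists_eq_mul, hD, range_mulVecLin_le_denominatorModule_iff]
    exact ⟨N', hN'⟩

theorem truncBasis_iff_irreducible_denominator
    (n ℓ m : ℕ) (hn : 1 ≤ n) (hl : 1 ≤ ℓ) (hln : ℓ ≤ n) (hm : 1 ≤ m) (hmn : m ≤ n)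
    (f a : K[X]) (hf : f.natDegree = n) (ha : a.degree < (n : WithBot ℕ))
    (D : Matrix (Fin m) (Fin m) K[X]) :
    (IsTruncBasis f a ℓ D ↔
      ∃ N, IsRightDesc (fracMat f a n ℓ m) N D ∧ IsIrreducibleRight N D) ∧
    (IsTruncBasis f a ℓ D →
      ∀ (N' : Matrix (Fin ℓ) (Fin m) K[X]) (D' : Matrix (Fin m) (Fin m) K[X]),
        IsRightDesc (fracMat f a n ℓ m) N' D' →
          ∃ W : Matrix (Fin m) (Fin m) K[X], D' = D * W) :=
  truncBasis_iff_irreducible_denominator_general n ℓ m hmn f a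
    ((degree_eq_iff_natDegree_eq_of_pos hn).2 hf) D
end
end

section
/- Let K be a field, f ∈ K[x] of degree n ≥ 1, a ∈ K[x] of degree < n, 1 ≤ m ≤ n, and d ≥ 1. Then rank Hk_{m,d}(a,f) ≤ ν_m^{(a,f)}. If rank Hk_{m,d}(a,f) = ν_m^{(a,f)}, then the determinantal degree of R_{m,m}^{(a,f)} equals ν_m^{(a,f)} and H(y) = X^T·(y·I_n − M_a)^{−1}·X is describable in degree d. In particular, if Hk_{m,d}(a,f) has rank n, then the determinantal degree of R_{m,m}^{(a,f)} and the determinantal degree ν_m^{(a,f)} of R_m^{(a,f)} both equal n and H(y) is describable in degree d. -/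
open Polynomial Matrix

noncomputable section

variable {K : Type*} [Field K]

/-- Degree of a polynomial matrix: the maximum of the degrees of its entries. -/
def matDeg {ι κ : Type*} [Fintype ι] [Fintype κ] (M : Matrix ι κ K[X]) : WithBot ℕ :=
  Finset.univ.sup fun p : ι × κ => (M p.1 p.2).degree

/-- `D̂⁻¹·N̂` is a left fraction description of `F`. -/
def IsLeftDesc {ℓ m : ℕ} (F : Matrix (Fin ℓ) (Fin m) (RatFunc K))
    (Dh : Matrix (Fin ℓ) (Fin ℓ) K[X]) (Nh : Matrix (Fin ℓ) (Fin m) K[X]) : Prop :=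
  Dh.det ≠ 0 ∧ Dh.map (algebraMap K[X] (RatFunc K)) * F = Nh.map (algebraMap K[X] (RatFunc K))

/-- `F` is describable in degree `d`. -/
def DescribableInDegree {ℓ m : ℕ} (F : Matrix (Fin ℓ) (Fin m) (RatFunc K)) (d : ℕ) : Prop :=
  (∃ N D, IsRightDesc F N D ∧ matDeg D ≤ (d : WithBot ℕ)) ∧
    (∃ Dh Nh, IsLeftDesc F Dh Nh ∧ matDeg Dh ≤ (d : WithBot ℕ))

/-- The block Hankel matrix `Hk_{m,d}(a,f)`, indexed by `Fin d × Fin m`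
(block row/column index first): its `((i,r),(j,c))` entry is `(Xᵀ · M_a^(i+j) · X) r c`. -/
def hankelMat (f a : K[X]) (n m d : ℕ) :
    Matrix (Fin d × Fin m) (Fin d × Fin m) K :=
  fun p q => ((Xup K n m)ᵀ * (mulMat f a n) ^ ((p.1 : ℕ) + (q.1 : ℕ)) * Xup K n m) p.2 q.2

/-!
Multiplication by `a` makes `V = K[x]/⟨f⟩` a linear system with inputs `1, x, …, x^(m-1)` and
outputs the first `m` coordinates. A vector `r` of polynomials drives it into the state
`r(x, a)`; it is a relation when this state is zero, and a truncated relation when all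
outputs along the trajectory of this state vanish. Hence the determinantal degrees of the two
modules are the dimensions of the space of reachable states and of its image in the space of
output sequences. The latter space is the column span of the infinite block Hankel matrix, so
`rank Hk_{m,d} ≤ deg R_{m,m} ≤ ν_m ≤ n`.

If `Hk_{m,d}` attains the rank of the infinite matrix, then the `d`-th block column is a
combination of the previous ones, and likewise for block rows. The coefficients form monic
matrices of degree `d`, and multiplying `H(y)` by these leaves a polynomial matrix: modulo
polynomials, the entries of the product are values of functionals `e ∘ (y - M_a)⁻¹` at states
without output, and these values are zero because `V` is a torsion `K[y]`-module.
-/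

section DeterminantalDegree

variable {ι : Type*} [Fintype ι] [DecidableEq ι]

theorem associated_det_prod_of_span_col {R : Type*} [CommRing R] {B : Matrix ι ι R}
    (hB : LinearIndependent R B.col) {N : Submodule R (ι → R)}
    (hN : Submodule.span R (Set.range B.col) = N) (b : Module.Basis ι R (ι → R))
    (b' : Module.Basis ι R N) {c : ι → R} (hc : ∀ i, (b' i : ι → R) = c i • b i) :
    Associated B.det (∏ i, c i) := by
  subst hN
  -- `vol` takes the values `B.det` and `∏ i, c i`, up to units, on two bases of the column span.
  let std := Pi.basisFun R ι
  let vol := std.det.compLinearMap (Submodule.span R (Set.range B.col)).subtype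
  have vol_col : vol (Module.Basis.span hB) = B.det := by
    simp only [vol, AlternatingMap.compLinearMap_apply, Submodule.coe_subtype, std,
      Pi.basisFun_det_apply]
    rw [← Matrix.det_transpose]
    congr 1
    ext i j
    simp [Module.Basis.span_apply]
  have vol_smith : vol b' = (∏ i, c i) * std.det b := by
    simp [vol, hc, AlternatingMap.map_smul_univ]
  have vol_change : vol (Module.Basis.span hB) = vol b' * b'.det (Module.Basis.span hB) := by
    conv_lhs => rw [AlternatingMap.eq_smul_basis_det b' vol]
    rfl
  have hunit : IsUnit (std.det b * b'.det (Module.Basis.span hB)) :=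
    (std.isUnit_det b).mul (b'.isUnit_det _)
  rw [← vol_col, vol_change, vol_smith, mul_assoc]
  exact associated_mul_unit_left _ _ hunit

theorem finrank_quotient_span_col {B : Matrix ι ι K[X]} (hB : B.det ≠ 0) :
    Module.finrank K ((ι → K[X]) ⧸ Submodule.span K[X] (Set.range B.col)) = B.det.natDegree := by
  have hli := Matrix.linearIndependent_cols_of_det_ne_zero hB
  have hrank : Module.finrank K[X] (Submodule.span K[X] (Set.range B.col)) =
      Module.finrank K[X] (ι → K[X]) := by
    rw [finrank_span_eq_card hli, Module.finrank_fintype_fun_eq_card]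
  let std := Pi.basisFun K[X] ι
  let c := Submodule.smithNormalFormCoeffs std hrank
  have hc : ∀ i, c i ≠ 0 := Submodule.smithNormalFormCoeffs_ne_zero std hrank
  have hfin (i : ι) : Module.Finite K (K[X] ⧸ Ideal.span {c i}) :=
    (AdjoinRoot.powerBasis (hc i)).finite
  have hdet : Associated B.det (∏ i, c i) :=
    associated_det_prod_of_span_col hli rfl _ _ (Submodule.smithNormalFormBotBasis_def std hrank)
  calc
    _ = ∑ i, Module.finrank K (K[X] ⧸ Ideal.span {c i}) :=
      Submodule.finrank_quotient_eq_sum K std hrank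
    _ = ∑ i, (c i).natDegree := by simp only [finrank_quotient_span_eq_natDegree]
    _ = (∏ i, c i).natDegree := (natDegree_prod _ _ fun i _ => hc i).symm
    _ = B.det.natDegree :=
      (natDegree_eq_of_degree_eq (degree_eq_degree_of_associated hdet)).symm

theorem finrank_range_eq_natDegree_det {W : Type*} [AddCommGroup W] [Module K W]
    (T : (ι → K[X]) →ₗ[K] W) {B : Matrix ι ι K[X]} (hB : B.det ≠ 0)
    (hker : LinearMap.ker T = (Submodule.span K[X] (Set.range B.col)).restrictScalars K) :
    Module.finrank K (LinearMap.range T) = B.det.natDegree := by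
  rw [← finrank_quotient_span_col hB, ← T.quotKerEquivRange.finrank_eq, hker]
  rfl

theorem det_ne_zero_of_degree_sub_X_pow_lt {R : Type*} [CommRing R] [IsDomain R] {d : ℕ}
    {D : Matrix ι ι R[X]}
    (hD : ∀ i j, (D i j - ((X ^ d : R[X]) • (1 : Matrix ι ι R[X])) i j).degree < d) :
    D.det ≠ 0 := by
  have hlow : (matPolyEquiv (D - (X ^ d : R[X]) • 1)).degree < d := by
    refine (degree_lt_iff_coeff_zero _ _).2 fun k hk => ?_
    ext i j
    rw [matPolyEquiv_coeff_apply]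
    exact coeff_eq_zero_of_degree_lt ((hD i j).trans_le (by exact_mod_cast hk))
  have hmonic : (matPolyEquiv D).Monic := by
    have h := monic_X_pow_add hlow
    rwa [map_sub, matPolyEquiv_smul_one, Polynomial.map_pow, map_X, add_sub_cancel] at h
  have hreg : IsLeftRegular D := fun P Q hPQ =>
    matPolyEquiv.injective <| hmonic.isRegular.left <| by
      simpa only [map_mul] using congrArg matPolyEquiv hPQ
  exact nonsingular_iff_det_ne_zero.1 (.of_leftRegular hreg)

end DeterminantalDegree

section FullRankSubmatrix

variable {I J I' J' : Type*} {H : Matrix I J K} {r : I' → I} {c : J' → J}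

theorem span_col_submatrix (H : Matrix I J K) (r : I' → I) (c : J' → J) :
    Submodule.span K (Set.range (H.submatrix r c).col) =
      (Submodule.span K (Set.range fun q => H.col (c q))).map (LinearMap.funLeft K K r) := by
  rw [Submodule.map_span, ← Set.range_comp]
  rfl

variable [Fintype J']

theorem rank_submatrix_le_finrank_span_col
    [FiniteDimensional K (Submodule.span K (Set.range H.col))] :
    (H.submatrix r c).rank ≤ Module.finrank K (Submodule.span K (Set.range H.col)) := by
  rw [Matrix.rank_eq_finrank_span_cols, span_col_submatrix]
  have : FiniteDimensional K (Submodule.span K (Set.range fun q => H.col (c q))) :=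
    .span_of_finite K (Set.finite_range _)
  exact (Submodule.finrank_map_le _ _).trans <|
    Submodule.finrank_mono (Submodule.span_mono (Set.range_comp_subset_range c H.col))

theorem span_col_comp_eq_of_rank_submatrix_eq
    [FiniteDimensional K (Submodule.span K (Set.range H.col))]
    (h : (H.submatrix r c).rank = Module.finrank K (Submodule.span K (Set.range H.col))) :
    Submodule.span K (Set.range fun q => H.col (c q)) = Submodule.span K (Set.range H.col) := by
  have : FiniteDimensional K (Submodule.span K (Set.range fun q => H.col (c q))) :=
    .span_of_finite K (Set.finite_range _)
  refine Submodule.eq_of_le_of_finrank_le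
    (Submodule.span_mono (Set.range_comp_subset_range c H.col)) ?_
  rw [← h, Matrix.rank_eq_finrank_span_cols, span_col_submatrix]
  exact Submodule.finrank_map_le _ _

theorem row_mem_span_of_rank_submatrix_eq [Finite I']
    [FiniteDimensional K (Submodule.span K (Set.range H.col))]
    (h : (H.submatrix r c).rank = Module.finrank K (Submodule.span K (Set.range H.col))) (i : I) :
    H.row i ∈ Submodule.span K (Set.range fun p => H.row (r p)) := by
  set S := Submodule.span K (Set.range H.col)
  -- Deleting all rows but those in `r` is injective on the column span, so each coordinate
  -- functional on the span factors through it.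
  let res := (LinearMap.funLeft K K r).domRestrict S
  have hres : Function.Injective res := by
    rw [← LinearMap.ker_eq_bot]
    refine Submodule.finrank_eq_zero.1 ?_
    have hrange : Module.finrank K (LinearMap.range res) = Module.finrank K S := by
      rw [LinearMap.range_domRestrict, ← h, Matrix.rank_eq_finrank_span_cols, span_col_submatrix,
        span_col_comp_eq_of_rank_submatrix_eq h]
    have := res.finrank_range_add_finrank_ker
    omega
  classical
  have := Fintype.ofFinite I'
  obtain ⟨φ, hφ⟩ := LinearMap.dualMap_surjective_of_injective hres
    (LinearMap.proj i ∘ₗ S.subtype)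
  refine (Submodule.mem_span_range_iff_exists_fun K).2
    ⟨fun p => φ fun q => if p = q then 1 else 0, ?_⟩
  ext j
  have hcol : φ (fun p => H (r p) j) = H i j :=
    LinearMap.congr_fun hφ ⟨H.col j, Submodule.subset_span ⟨j, rfl⟩⟩
  refine Eq.trans ?_ hcol
  rw [LinearMap.pi_apply_eq_sum_univ φ]
  simp [mul_comm]

end FullRankSubmatrix

section KrylovRelations

theorem matDeg_le_iff {ι κ : Type*} [Fintype ι] [Fintype κ] {M : Matrix ι κ K[X]}
    {d : WithBot ℕ} : matDeg M ≤ d ↔ ∀ i j, (M i j).degree ≤ d := by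
  simp [matDeg, Prod.forall]

theorem exists_det_ne_zero_forall_row_mem_ker {κ W : Type*} [Fintype κ] [DecidableEq κ]
    [AddCommGroup W] [Module K W] (T : (κ → K[X]) →ₗ[K] W) {d : ℕ}
    (hT : ∀ i, T (Pi.single i (X ^ d)) ∈
      Submodule.span K (Set.range fun p : Fin d × κ => T (Pi.single p.2 (X ^ (p.1 : ℕ))))) :
    ∃ D : Matrix κ κ K[X], D.det ≠ 0 ∧ (∀ i j, (D i j).degree ≤ d) ∧ ∀ i, T (D.row i) = 0 := by
  choose z hz using fun i => (Submodule.mem_span_range_iff_exists_fun K).1 (hT i)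
  let L (i : κ) : κ → K[X] := ∑ p : Fin d × κ, z i p • Pi.single p.2 (X ^ (p.1 : ℕ))
  have hL (i j) : (L i j).degree < d := by
    rw [← mem_degreeLT]
    simp only [L, Finset.sum_apply, Pi.smul_apply]
    refine Submodule.sum_mem _ fun p _ => Submodule.smul_mem _ _ ?_
    rw [Pi.single_apply, mem_degreeLT]
    split_ifs <;> simp
  refine ⟨.of fun i => Pi.single (M := fun _ => K[X]) i (X ^ d) - L i, ?_, fun i j => ?_,
    fun i => ?_⟩
  · refine det_ne_zero_of_degree_sub_X_pow_lt (d := d) fun i j => ?_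
    have hentry : (Pi.single (M := fun _ => K[X]) i (X ^ d) - L i) j -
        ((X ^ d : K[X]) • (1 : Matrix κ κ K[X])) i j = -L i j := by
      simp [Matrix.one_apply, Pi.single_apply, eq_comm]
    simpa only [of_apply, hentry, degree_neg] using hL i j
  · refine (degree_sub_le _ _).trans (max_le ?_ (hL i j).le)
    rw [Pi.single_apply]
    split_ifs <;> simp
  · change T (Pi.single i (X ^ d) - L i) = 0
    simp [L, hz]

end KrylovRelations

section LinearSystem

variable {V : Type*} [AddCommGroup V] [Module K V] [Module K[X] V] [IsScalarTower K K[X] V]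

/-- `ρ` is the transfer functional of the output functional `e` on the state space `V`, whose
transition map `A` is multiplication by `X`: this equation characterizes `ρ = e ∘ (y - A)⁻¹`. -/
def IsTransfer (e : V →ₗ[K] K) (ρ : V →ₗ[K] RatFunc K) : Prop :=
  ∀ w, (X : K[X]) • ρ w = algebraMap K (RatFunc K) (e w) + ρ ((X : K[X]) • w)

namespace IsTransfer

variable {e : V →ₗ[K] K} {ρ : V →ₗ[K] RatFunc K} {ι : Type*} [Fintype ι]

theorem smul_sub_mem (hρ : IsTransfer e ρ) {P : Submodule K[X] (RatFunc K)} (p : K[X]) {w : V}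
    (hw : ∀ k : ℕ, algebraMap K (RatFunc K) (e ((X ^ k : K[X]) • w)) ∈ P) :
    p • ρ w - ρ (p • w) ∈ P := by
  induction p using Polynomial.induction_on generalizing w with
  | C c =>
    have hC : C c • ρ w = ρ (C c • w) := by
      rw [← algebraMap_eq, algebraMap_smul, algebraMap_smul, map_smul]
    simp [hC]
  | add p q hp hq =>
    rw [add_smul, add_smul, map_add, add_sub_add_comm]
    exact P.add_mem (hp hw) (hq hw)
  | monomial k c ih =>
    have hstep := ih (w := (X : K[X]) • w) fun j => by
      simpa only [smul_smul, ← pow_succ] using hw (j + 1)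
    have hew : algebraMap K (RatFunc K) (e w) ∈ P := by simpa using hw 0
    rw [pow_succ, ← mul_assoc, mul_smul _ X, mul_smul _ X, hρ, smul_add, add_sub_assoc]
    exact P.add_mem (P.smul_mem _ hew) hstep

theorem eq_zero (hρ : IsTransfer e ρ) (hV : Module.IsTorsion K[X] V) {w : V}
    (hw : ∀ k : ℕ, e ((X ^ k : K[X]) • w) = 0) : ρ w = 0 := by
  obtain ⟨⟨p, hp⟩, hpw⟩ := hV (x := w)
  have hpρ : p • ρ w - ρ (p • w) ∈ (⊥ : Submodule K[X] (RatFunc K)) :=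
    hρ.smul_sub_mem p fun k => by simp [hw k]
  have hpw' : p • w = 0 := hpw
  rw [hpw', map_zero, sub_zero, Submodule.mem_bot] at hpρ
  exact (smul_eq_zero.1 hpρ).resolve_left (nonZeroDivisors.ne_zero hp)

theorem sum_comp_smul {e : ι → V →ₗ[K] K} {ρ : ι → V →ₗ[K] RatFunc K}
    (hρ : ∀ i, IsTransfer (e i) (ρ i)) (r : ι → K[X]) :
    IsTransfer (∑ i, e i ∘ₗ Algebra.lsmul K K V (r i)) (∑ i, ρ i ∘ₗ Algebra.lsmul K K V (r i)) :=
  fun w => by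
    simp only [LinearMap.sum_apply, map_sum, Finset.smul_sum, ← Finset.sum_add_distrib]
    refine Finset.sum_congr rfl fun i _ => ?_
    simpa [smul_comm (r i)] using hρ i (r i • w)

theorem sum_smul_mem_one {e : ι → V →ₗ[K] K} {ρ : ι → V →ₗ[K] RatFunc K}
    (hρ : ∀ i, IsTransfer (e i) (ρ i)) {r : ι → K[X]} {w : ι → V}
    (h : ∑ i, ρ i (r i • w i) = 0) :
    ∑ i, r i • ρ i (w i) ∈ (1 : Submodule K[X] (RatFunc K)) := by
  rw [← sub_zero (∑ i, r i • ρ i (w i)), ← h, ← Finset.sum_sub_distrib]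
  refine Submodule.sum_mem _ fun i _ => (hρ i).smul_sub_mem _ fun k => ?_
  exact Submodule.mem_one.2 ⟨C (e i ((X ^ k : K[X]) • w i)), by simp [← algebraMap_eq]⟩

end IsTransfer

variable {ℓ κ : Type*}

/-- The output functionals `e i` along the trajectory `w, X • w, X² • w, …` of a state `w`. -/
def outputSeq (e : ℓ → V →ₗ[K] K) : V →ₗ[K] (ℕ × ℓ → K) :=
  LinearMap.pi fun p => e p.2 ∘ₗ Algebra.lsmul K K V (X ^ p.1 : K[X])

theorem outputSeq_apply (e : ℓ → V →ₗ[K] K) (w : V) (k : ℕ) (i : ℓ) :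
    outputSeq e w (k, i) = e i ((X ^ k : K[X]) • w) :=
  rfl

theorem outputSeq_eq_zero_iff {e : ℓ → V →ₗ[K] K} {w : V} :
    outputSeq e w = 0 ↔ ∀ (k : ℕ) (i : ℓ), e i ((X ^ k : K[X]) • w) = 0 := by
  simp only [funext_iff, Prod.forall, outputSeq_apply, Pi.zero_apply]

/-- The unobservable states: those whose output sequence vanishes. -/
def unobservable (e : ℓ → V →ₗ[K] K) : Submodule K[X] V where
  __ := LinearMap.ker (outputSeq e)
  smul_mem' p w hw := by
    have hvanish (i : ℓ) :
        e i ∘ₗ (LinearMap.toSpanSingleton K[X] V w).restrictScalars K = 0 := by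
      refine Polynomial.lhom_ext' fun k => LinearMap.ext_ring ?_
      simpa [← X_pow_eq_monomial] using outputSeq_eq_zero_iff.1 hw k i
    refine outputSeq_eq_zero_iff.2 fun k i => ?_
    simpa [smul_smul] using LinearMap.congr_fun (hvanish i) (X ^ k * p)

theorem mem_unobservable_iff {e : ℓ → V →ₗ[K] K} {w : V} :
    w ∈ unobservable e ↔ ∀ (k : ℕ) (i : ℓ), e i ((X ^ k : K[X]) • w) = 0 :=
  outputSeq_eq_zero_iff

/-- The infinite block Hankel matrix of the system with output functionals `e` and inputs `u`;
its blocks are indexed by the first components. -/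
def systemHankel (e : ℓ → V →ₗ[K] K) (u : κ → V) : Matrix (ℕ × ℓ) (ℕ × κ) K :=
  fun p q => e p.2 ((X ^ (p.1 + q.1) : K[X]) • u q.2)

theorem outputSeq_X_pow_smul (e : ℓ → V →ₗ[K] K) (u : κ → V) (t : ℕ) (j : κ) :
    outputSeq e ((X ^ t : K[X]) • u j) = (systemHankel e u).col (t, j) := by
  ext ⟨k, i⟩
  simp [outputSeq_apply, systemHankel, smul_smul, pow_add]

/-- The `K`-linear combinations of the block rows of `systemHankel e u`, the coefficient of the
`(t, i)`-th row being the `t`-th coefficient of `r i`. -/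
def rowCombination [Fintype ℓ] (e : ℓ → V →ₗ[K] K) (u : κ → V) :
    (ℓ → K[X]) →ₗ[K] (ℕ × κ → K) :=
  LinearMap.pi fun q => ∑ i, e i ∘ₗ
    (LinearMap.toSpanSingleton K[X] V ((X ^ q.1 : K[X]) • u q.2)).restrictScalars K ∘ₗ
      LinearMap.proj i

theorem rowCombination_apply [Fintype ℓ] (e : ℓ → V →ₗ[K] K) (u : κ → V) (r : ℓ → K[X])
    (k : ℕ) (j : κ) : rowCombination e u r (k, j) = ∑ i, e i (r i • (X ^ k : K[X]) • u j) := by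
  simp [rowCombination]

theorem rowCombination_single [Fintype ℓ] [DecidableEq ℓ] (e : ℓ → V →ₗ[K] K) (u : κ → V)
    (t : ℕ) (i : ℓ) :
    rowCombination e u (Pi.single i (X ^ t)) = (systemHankel e u).row (t, i) := by
  ext ⟨k, j⟩
  rw [rowCombination_apply, Finset.sum_eq_single i]
  · simp [systemHankel, smul_smul, pow_add]
  · intro i' _ hi'
    simp [hi']
  · simp

theorem range_outputSeq_comp_linearCombination [Fintype κ] (e : ℓ → V →ₗ[K] K) (u : κ → V) :
    LinearMap.range (outputSeq e ∘ₗ (Fintype.linearCombination K[X] u).restrictScalars K) =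
      Submodule.span K (Set.range (systemHankel e u).col) := by
  classical
  let monomials := Pi.basis fun _ : κ => Polynomial.basisMonomials K
  rw [LinearMap.range_eq_map, ← monomials.span_eq, Submodule.map_span, ← Set.range_comp,
    ← (Equiv.sigmaEquivProd κ ℕ |>.trans (Equiv.prodComm κ ℕ)).surjective.range_comp]
  congr 2
  ext1 ⟨j, t⟩
  simp [monomials, Polynomial.X_pow_eq_monomial, ← outputSeq_X_pow_smul,
    Fintype.linearCombination_apply_single]

instance finiteDimensional_span_col_systemHankel [Finite κ] [Module.Finite K V]
    (e : ℓ → V →ₗ[K] K) (u : κ → V) :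
    FiniteDimensional K (Submodule.span K (Set.range (systemHankel e u).col)) := by
  have := Fintype.ofFinite κ
  rw [← range_outputSeq_comp_linearCombination, LinearMap.range_comp]
  infer_instance

theorem finrank_span_col_systemHankel_le [Fintype κ] [Module.Finite K V]
    (e : ℓ → V →ₗ[K] K) (u : κ → V) :
    Module.finrank K (Submodule.span K (Set.range (systemHankel e u).col)) ≤
      Module.finrank K
        (LinearMap.range ((Fintype.linearCombination K[X] u).restrictScalars K)) := by
  rw [← range_outputSeq_comp_linearCombination, LinearMap.range_comp]
  exact Submodule.finrank_map_le _ _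

variable [Fintype κ] [DecidableEq κ] {u : κ → V}

theorem finrank_range_linearCombination_eq_natDegree_det {B : Matrix κ κ K[X]} (hB : B.det ≠ 0)
    (hspan : Submodule.span K[X] (Set.range B.col) =
      LinearMap.ker (Fintype.linearCombination K[X] u)) :
    Module.finrank K
        (LinearMap.range ((Fintype.linearCombination K[X] u).restrictScalars K)) =
      B.det.natDegree :=
  finrank_range_eq_natDegree_det _ hB (by rw [hspan]; rfl)

theorem finrank_span_col_systemHankel_eq_natDegree_det {e : ℓ → V →ₗ[K] K} {D : Matrix κ κ K[X]}
    (hD : D.det ≠ 0)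
    (hspan : Submodule.span K[X] (Set.range D.col) =
      (unobservable e).comap (Fintype.linearCombination K[X] u)) :
    Module.finrank K (Submodule.span K (Set.range (systemHankel e u).col)) = D.det.natDegree := by
  rw [← range_outputSeq_comp_linearCombination]
  exact finrank_range_eq_natDegree_det _ hD (by rw [hspan]; rfl)

end LinearSystem

section Describability

variable {V : Type*} [AddCommGroup V] [Module K V] [Module K[X] V] [IsScalarTower K K[X] V]
  {l m d : ℕ} {e : Fin l → V →ₗ[K] K} {ρ : Fin l → V →ₗ[K] RatFunc K} {u : Fin m → V}

theorem exists_isRightDesc (hρ : ∀ i, IsTransfer (e i) (ρ i)) (hV : Module.IsTorsion K[X] V)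
    (hcol : ∀ j, (systemHankel e u).col (d, j) ∈ Submodule.span K
      (Set.range fun p : Fin d × Fin m => (systemHankel e u).col ((p.1 : ℕ), p.2))) :
    ∃ N D, IsRightDesc (.of fun i j => ρ i (u j)) N D ∧ matDeg D ≤ (d : WithBot ℕ) := by
  let T := outputSeq e ∘ₗ (Fintype.linearCombination K[X] u).restrictScalars K
  have hT (t : ℕ) (j : Fin m) : T (Pi.single j (X ^ t)) = (systemHankel e u).col (t, j) := by
    simp [T, Fintype.linearCombination_apply_single, outputSeq_X_pow_smul]
  obtain ⟨D, hdet, hdeg, hker⟩ := exists_det_ne_zero_forall_row_mem_ker T (d := d) (by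
    simpa only [hT] using hcol)
  have hpoly (i : Fin l) (j : Fin m) :
      ∑ k, D j k • ρ i (u k) ∈ (1 : Submodule K[X] (RatFunc K)) := by
    refine IsTransfer.sum_smul_mem_one (fun _ => hρ i) ?_
    rw [← map_sum]
    exact (hρ i).eq_zero hV fun k => outputSeq_eq_zero_iff.1 (hker j) k i
  choose N hN using fun i j => Submodule.mem_one.1 (hpoly i j)
  refine ⟨.of N, Dᵀ, ⟨by rwa [det_transpose], ?_⟩, matDeg_le_iff.2 fun i j => hdeg j i⟩
  ext i j
  simp [mul_apply, hN, Algebra.smul_def, mul_comm]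

theorem exists_isLeftDesc (hρ : ∀ i, IsTransfer (e i) (ρ i)) (hV : Module.IsTorsion K[X] V)
    (hrow : ∀ i, (systemHankel e u).row (d, i) ∈ Submodule.span K
      (Set.range fun p : Fin d × Fin l => (systemHankel e u).row ((p.1 : ℕ), p.2))) :
    ∃ D N, IsLeftDesc (.of fun i j => ρ i (u j)) D N ∧ matDeg D ≤ (d : WithBot ℕ) := by
  obtain ⟨D, hdet, hdeg, hker⟩ :=
    exists_det_ne_zero_forall_row_mem_ker (rowCombination e u) (d := d) (by
      simpa only [rowCombination_single] using hrow)
  have hpoly (i : Fin l) (j : Fin m) :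
      ∑ k, D i k • ρ k (u j) ∈ (1 : Submodule K[X] (RatFunc K)) := by
    refine IsTransfer.sum_smul_mem_one hρ ?_
    have hzero := (IsTransfer.sum_comp_smul hρ (D i)).eq_zero hV (w := u j) fun k => by
      simpa using (rowCombination_apply e u (D i) k j).symm.trans (congrFun (hker i) (k, j))
    simpa using hzero
  choose N hN using fun i j => Submodule.mem_one.1 (hpoly i j)
  refine ⟨D, .of N, ⟨hdet, ?_⟩, matDeg_le_iff.2 hdeg⟩
  ext i j
  simp [mul_apply, hN, Algebra.smul_def]

/-- The top left `d × d` blocks of `systemHankel e u`. -/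
def truncatedHankel (e : Fin l → V →ₗ[K] K) (u : Fin m → V) (d : ℕ) :
    Matrix (Fin d × Fin l) (Fin d × Fin m) K :=
  (systemHankel e u).submatrix (Prod.map (↑) id) (Prod.map (↑) id)

theorem describableInDegree_of_rank_truncatedHankel_eq [Module.Finite K V]
    (hρ : ∀ i, IsTransfer (e i) (ρ i)) (hV : Module.IsTorsion K[X] V)
    (h : (truncatedHankel e u d).rank =
      Module.finrank K (Submodule.span K (Set.range (systemHankel e u).col))) :
    DescribableInDegree (.of fun i j => ρ i (u j)) d := by
  refine ⟨exists_isRightDesc hρ hV fun j => ?_, exists_isLeftDesc hρ hV fun i => ?_⟩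
  · exact (span_col_comp_eq_of_rank_submatrix_eq h).ge (Submodule.subset_span ⟨(d, j), rfl⟩)
  · exact row_mem_span_of_rank_submatrix_eq h (d, i)

end Describability

section Resolvent

variable {ι : Type*} [Fintype ι] [DecidableEq ι]

theorem map_charmatrix_algebraMap (M : Matrix ι ι K) :
    (charmatrix M).map (algebraMap K[X] (RatFunc K)) =
      scalar ι (algebraMap K[X] (RatFunc K) X) - M.map (algebraMap K (RatFunc K)) := by
  ext i j
  by_cases h : i = j <;> simp [h]

theorem X_smul_resolvent (M : Matrix ι ι K) :
    (X : K[X]) • ((charmatrix M).map (algebraMap K[X] (RatFunc K)))⁻¹ =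
      1 + ((charmatrix M).map (algebraMap K[X] (RatFunc K)))⁻¹ *
        M.map (algebraMap K (RatFunc K)) := by
  have hdet : IsUnit ((charmatrix M).map (algebraMap K[X] (RatFunc K))).det := by
    rw [← RingHom.mapMatrix_apply, ← RingHom.map_det, isUnit_iff_ne_zero, ne_eq,
      FaithfulSMul.algebraMap_eq_zero_iff]
    exact M.charpoly_monic.ne_zero
  have hinv := nonsing_inv_mul _ hdet
  nth_rw 2 [map_charmatrix_algebraMap] at hinv
  rw [← hinv, mul_sub, sub_add_cancel]
  ext i j
  simp [Algebra.smul_def, mul_comm]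

/-- The functional `w ↦ c ⬝ᵥ w` on the `K[X]`-module defined by `M`. -/
def dotFunctional (M : Matrix ι ι K) (c : ι → K) : Module.AEval' (toLin' M) →ₗ[K] K where
  toFun w := c ⬝ᵥ (Module.AEval'.of (toLin' M)).symm w
  map_add' v w := by rw [map_add, dotProduct_add]
  map_smul' r w := by rw [map_smul, dotProduct_smul, RingHom.id_apply]

/-- The functional `w ↦ c ⬝ᵥ (y - M)⁻¹ w` on the `K[X]`-module defined by `M`. -/
def resolventFunctional (M : Matrix ι ι K) (c : ι → K) :
    Module.AEval' (toLin' M) →ₗ[K] RatFunc K where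
  toFun w := (algebraMap K (RatFunc K) ∘ c) ⬝ᵥ
    ((charmatrix M).map (algebraMap K[X] (RatFunc K)))⁻¹ *ᵥ
      (algebraMap K (RatFunc K) ∘ (Module.AEval'.of (toLin' M)).symm w)
  map_add' v w := by
    rw [← dotProduct_add, ← mulVec_add]
    congr 2
    ext i
    simp
  map_smul' r w := by
    rw [RingHom.id_apply, ← dotProduct_smul, ← mulVec_smul]
    congr 2
    ext i
    simp [Algebra.smul_def]

theorem isTransfer_resolventFunctional (M : Matrix ι ι K) (c : ι → K) :
    IsTransfer (dotFunctional M c) (resolventFunctional M c) := fun w => by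
  let σ := algebraMap K (RatFunc K)
  obtain ⟨w, rfl⟩ := (Module.AEval'.of (toLin' M)).surjective w
  have hMw : σ ∘ (M *ᵥ w) = M.map σ *ᵥ (σ ∘ w) := funext fun i => RingHom.map_mulVec σ M w i
  have hcw : σ (c ⬝ᵥ w) = (σ ∘ c) ⬝ᵥ (σ ∘ w) := RingHom.map_dotProduct σ c w
  simp only [resolventFunctional, dotFunctional, LinearMap.coe_mk, AddHom.coe_mk,
    Module.AEval'.X_smul_of, LinearEquiv.symm_apply_apply, toLin'_apply]
  rw [← dotProduct_smul, ← smul_mulVec, X_smul_resolvent, add_mulVec, one_mulVec, dotProduct_add,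
    ← mulVec_mulVec, ← hMw, ← hcw]

end Resolvent

section Residues

variable {f : K[X]} {n : ℕ}

/-- The coefficient vector of the remainder modulo `f`. -/
def modCoeff (f : K[X]) (n : ℕ) : K[X] →ₗ[K] (Fin n → K) where
  toFun p i := (p % f).coeff i
  map_add' p q := by ext i; simp [Polynomial.add_mod]
  map_smul' c p := by ext i; simp [Polynomial.mod_def, smul_modByMonic]

theorem modCoeff_apply (p : K[X]) (i : Fin n) : modCoeff f n p i = (p % f).coeff i :=
  rfl

theorem degree_mod_lt_of_degree_eq (hf : f.degree = n) (p : K[X]) : (p % f).degree < n :=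
  hf ▸ degree_mod_lt p fun h => by simp [h] at hf

theorem modCoeff_eq_zero_iff (hf : f.degree = n) {p : K[X]} : modCoeff f n p = 0 ↔ f ∣ p := by
  rw [← EuclideanDomain.mod_eq_zero]
  refine ⟨fun h => ext fun k => ?_, fun h => funext fun i => by simp [modCoeff_apply, h]⟩
  rcases lt_or_ge k n with hk | hk
  · exact congrFun h ⟨k, hk⟩
  · exact coeff_eq_zero_of_degree_lt
      ((degree_mod_lt_of_degree_eq hf p).trans_le (by exact_mod_cast hk))

theorem mulMat_mulVec_modCoeff (hf : f.degree = n) (a p : K[X]) :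
    mulMat f a n *ᵥ modCoeff f n p = modCoeff f n (a * p) := by
  have hmod : modCoeff f n (a * p) = modCoeff f n (a * (p % f)) := by
    rw [← sub_eq_zero, ← map_sub, modCoeff_eq_zero_iff hf, ← mul_sub]
    exact Dvd.dvd.mul_left ⟨p / f, by rw [EuclideanDomain.mod_eq_sub_mul_div, sub_sub_cancel]⟩ a
  have hsum : p % f = ∑ k : Fin n, (p % f).coeff k • X ^ (k : ℕ) := by
    simpa [smul_X_eq_monomial, sum_monomial_eq] using
      (sum_fin (fun k c => monomial k c) monomial_zero_right (degree_mod_lt_of_degree_eq hf p)).symm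
  have hcol (k : Fin n) : (mulMat f a n).col k = modCoeff f n (a * X ^ (k : ℕ)) := by
    rw [mul_comm]
    rfl
  rw [hmod, hsum, Finset.mul_sum, map_sum]
  ext i
  simp [mulVec, dotProduct, ← hcol, modCoeff_apply, mul_comm]

/-- The `K[X]`-module `K[x]/⟨f⟩` in coordinates, `X` acting as multiplication by `a`. -/
abbrev ResidueModule (f a : K[X]) (n : ℕ) : Type _ :=
  Module.AEval' (toLin' (mulMat f a n))

theorem finrank_residueModule (f a : K[X]) (n : ℕ) :
    Module.finrank K (ResidueModule f a n) = n := by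
  rw [← (Module.AEval'.of (toLin' (mulMat f a n))).finrank_eq, Module.finrank_fin_fun]

/-- The residue class of a polynomial modulo `f`. -/
def residue (f a : K[X]) (n : ℕ) : K[X] →ₗ[K] ResidueModule f a n :=
  (Module.AEval'.of (toLin' (mulMat f a n))).toLinearMap ∘ₗ modCoeff f n

theorem residue_eq_zero_iff (hf : f.degree = n) {a p : K[X]} : residue f a n p = 0 ↔ f ∣ p := by
  rw [← modCoeff_eq_zero_iff hf]
  exact (Module.AEval'.of (toLin' (mulMat f a n))).map_eq_zero_iff

theorem X_pow_smul_residue (hf : f.degree = n) (a p : K[X]) (k : ℕ) :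
    (X ^ k : K[X]) • residue f a n p = residue f a n (a ^ k * p) := by
  induction k with
  | zero => simp
  | succ k ih =>
    rw [pow_succ', mul_smul, ih, pow_succ', mul_assoc, residue, LinearMap.comp_apply,
      LinearMap.comp_apply, ← mulMat_mulVec_modCoeff hf a]
    exact Module.AEval'.X_smul_of (toLin' (mulMat f a n)) _

theorem smul_residue (hf : f.degree = n) (a p q : K[X]) :
    q • residue f a n p = residue f a n (q.comp a * p) := by
  induction q using Polynomial.induction_on' with
  | add q r hq hr => rw [add_smul, hq, hr, add_comp, add_mul, map_add]
  | monomial k c =>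
    rw [← C_mul_X_pow_eq_monomial, ← smul_eq_C_mul, smul_assoc, X_pow_smul_residue hf, ← map_smul,
      smul_comp, X_pow_comp, smul_mul_assoc]

variable {m : ℕ}

/-- The residues of `1, x, …, x^(m-1)`, on which `r(x, a)` is the combination with
coefficients `r`. -/
def powerResidue (f a : K[X]) (n m : ℕ) (j : Fin m) : ResidueModule f a n :=
  residue f a n (X ^ (j : ℕ))

theorem linearCombination_powerResidue (hf : f.degree = n) (a : K[X]) (v : Fin m → K[X]) :
    Fintype.linearCombination K[X] (powerResidue f a n m) v = residue f a n (relEval a v) := by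
  simp only [powerResidue, Fintype.linearCombination_apply, smul_residue hf, relEval, map_sum,
    mul_comm]

theorem col_Xup (hf : f.degree = n) (hmn : m ≤ n) (j : Fin m) :
    (Xup K n m).col j = modCoeff f n (X ^ (j : ℕ)) := by
  have hmod : (X ^ (j : ℕ) : K[X]) % f = X ^ (j : ℕ) := by
    rw [Polynomial.mod_eq_self_iff (fun h => by simp [h] at hf), degree_X_pow, hf]
    exact_mod_cast j.2.trans_le hmn
  ext i
  simp [Xup, modCoeff_apply, hmod, coeff_X_pow]

theorem powerResidue_eq_of_col_Xup (hf : f.degree = n) (hmn : m ≤ n) (a : K[X]) (j : Fin m) :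
    powerResidue f a n m j =
      Module.AEval'.of (toLin' (mulMat f a n)) ((Xup K n m).col j) := by
  rw [col_Xup hf hmn]
  rfl

theorem col_Xup_dotProduct (hmn : m ≤ n) (i : Fin m) (w : Fin n → K) :
    (Xup K n m).col i ⬝ᵥ w = w (Fin.castLE hmn i) := by
  have hcol : (Xup K n m).col i = Pi.single (Fin.castLE hmn i) 1 := by
    ext k
    simp [Xup, Pi.single_apply, Fin.ext_iff]
  rw [hcol, single_one_dotProduct]

/-- The `i`-th coordinate on `K[x]/⟨f⟩`, as the `i`-th row of `Xᵀ`. -/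
def coordFunctional (f a : K[X]) (n m : ℕ) (i : Fin m) : ResidueModule f a n →ₗ[K] K :=
  dotFunctional (mulMat f a n) ((Xup K n m).col i)

theorem coordFunctional_residue (hmn : m ≤ n) (a p : K[X]) (i : Fin m) :
    coordFunctional f a n m i (residue f a n p) = (p % f).coeff i :=
  col_Xup_dotProduct hmn i (modCoeff f n p)

end Residues

section Relations

variable {f a : K[X]} {n m d : ℕ}

theorem IsRelBasis.span_col (hf : f.degree = n) {B : Matrix (Fin m) (Fin m) K[X]}
    (hB : IsRelBasis f a B) :
    Submodule.span K[X] (Set.range B.col) =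
      LinearMap.ker (Fintype.linearCombination K[X] (powerResidue f a n m)) := by
  have hmem (v : Fin m → K[X]) :
      v ∈ LinearMap.ker (Fintype.linearCombination K[X] (powerResidue f a n m)) ↔
        IsRelation f a v := by
    rw [LinearMap.mem_ker, linearCombination_powerResidue hf, residue_eq_zero_iff hf]
    rfl
  refine le_antisymm (Submodule.span_le.2 ?_) fun v hv => hB.2 v ((hmem v).1 hv)
  rintro _ ⟨j, rfl⟩
  exact (hmem _).2 (hB.1.2 j)

theorem IsTruncBasis.span_col (hf : f.degree = n) (hmn : m ≤ n)
    {D : Matrix (Fin m) (Fin m) K[X]} (hD : IsTruncBasis f a m D) :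
    Submodule.span K[X] (Set.range D.col) =
      (unobservable (coordFunctional f a n m)).comap
        (Fintype.linearCombination K[X] (powerResidue f a n m)) := by
  have hmem (v : Fin m → K[X]) :
      v ∈ (unobservable (coordFunctional f a n m)).comap
        (Fintype.linearCombination K[X] (powerResidue f a n m)) ↔ IsTruncRelation f a m v := by
    simp only [Submodule.mem_comap, mem_unobservable_iff, linearCombination_powerResidue hf,
      X_pow_smul_residue hf, coordFunctional_residue hmn, IsTruncRelation, Fin.forall_iff]
  refine le_antisymm (Submodule.span_le.2 ?_) fun v hv => hD.2.2 v ((hmem v).1 hv)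
  rintro _ ⟨j, rfl⟩
  exact (hmem _).2 (hD.2.1 j)

theorem hankelMat_eq_truncatedHankel (hf : f.degree = n) (hmn : m ≤ n) :
    hankelMat f a n m d = truncatedHankel (coordFunctional f a n m) (powerResidue f a n m) d := by
  ext ⟨s, i⟩ ⟨t, j⟩
  simp only [truncatedHankel, submatrix_apply, Prod.map_apply, systemHankel,
    powerResidue_eq_of_col_Xup hf hmn, Module.AEval.X_pow_smul_of]
  rw [hankelMat, Matrix.mul_assoc, ← toLin'_pow]
  rfl

theorem fracMat_eq_resolventFunctional (hf : f.degree = n) (hmn : m ≤ n) :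
    fracMat f a n m m = .of fun i j =>
      resolventFunctional (mulMat f a n) ((Xup K n m).col i) (powerResidue f a n m j) := by
  have hrow (i : Fin m) :
      (projL (RatFunc K) m n).row i = algebraMap K (RatFunc K) ∘ (Xup K n m).col i := by
    ext k
    simp [projL, Xup, eq_comm]
  have hcol (j : Fin m) :
      (Xup (RatFunc K) n m).col j = algebraMap K (RatFunc K) ∘ (Xup K n m).col j := by
    ext k
    simp [Xup]
  ext i j
  rw [fracMat, Matrix.mul_assoc]
  change (projL (RatFunc K) m n).row i ⬝ᵥ
    ((charmatrix (mulMat f a n)).map (algebraMap K[X] (RatFunc K)))⁻¹ *ᵥ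
      (Xup (RatFunc K) n m).col j = _
  rw [hrow, hcol, of_apply, powerResidue_eq_of_col_Xup hf hmn]
  rfl

end Relations

theorem rank_hankel_le_determinantalDegree_general
    (n m d : ℕ) (hmn : m ≤ n) (f a : K[X]) (hf : f.degree = n)
    (B₀ : Matrix (Fin m) (Fin m) K[X]) (hB₀ : IsRelBasis f a B₀)
    (D₀ : Matrix (Fin m) (Fin m) K[X]) (hD₀ : IsTruncBasis f a m D₀) :
    (hankelMat f a n m d).rank ≤ D₀.det.natDegree ∧
    D₀.det.natDegree ≤ B₀.det.natDegree ∧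
    B₀.det.natDegree ≤ n ∧
    ((hankelMat f a n m d).rank = D₀.det.natDegree →
      DescribableInDegree (fracMat f a n m m) d) := by
  have hB := finrank_range_linearCombination_eq_natDegree_det hB₀.1.1 (hB₀.span_col hf)
  have hD := finrank_span_col_systemHankel_eq_natDegree_det hD₀.1 (hD₀.span_col hf hmn)
  rw [hankelMat_eq_truncatedHankel hf hmn, fracMat_eq_resolventFunctional hf hmn, ← hB, ← hD]
  exact ⟨rank_submatrix_le_finrank_span_col, finrank_span_col_systemHankel_le _ _,
    (Submodule.finrank_le _).trans_eq (finrank_residueModule f a n), fun h =>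
      describableInDegree_of_rank_truncatedHankel_eq
        (fun i => isTransfer_resolventFunctional _ _)
        (Module.AEval.isTorsion_of_finiteDimensional K _ _) h⟩

theorem rank_hankel_le_determinantalDegree
    (n m d : ℕ) (hn : 1 ≤ n) (hm : 1 ≤ m) (hmn : m ≤ n) (hd : 1 ≤ d)
    (f a : K[X]) (hf : f.natDegree = n) (ha : a.degree < (n : WithBot ℕ))
    (B₀ : Matrix (Fin m) (Fin m) K[X]) (hB₀ : IsRelBasis f a B₀)
    (D₀ : Matrix (Fin m) (Fin m) K[X]) (hD₀ : IsTruncBasis f a m D₀) :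
    (hankelMat f a n m d).rank ≤ B₀.det.natDegree ∧
    ((hankelMat f a n m d).rank = B₀.det.natDegree →
      D₀.det.natDegree = B₀.det.natDegree ∧
        DescribableInDegree (fracMat f a n m m) d) ∧
    ((hankelMat f a n m d).rank = n →
      D₀.det.natDegree = n ∧ B₀.det.natDegree = n ∧
        DescribableInDegree (fracMat f a n m m) d) := by
  obtain ⟨hle, hDB, hBn, hdesc⟩ := rank_hankel_le_determinantalDegree_general n m d hmn f a
    ((degree_eq_iff_natDegree_eq_of_pos hn).2 hf) B₀ hB₀ D₀ hD₀
  exact ⟨hle.trans hDB, fun h => ⟨by omega, hdesc (by omega)⟩,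
    fun h => ⟨by omega, by omega, hdesc (by omega)⟩⟩
end
end
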